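/- arXiv:2311.10183 — 4 statements merged into one kernel-verified Lean document; each statement's English description precedes it below -/
import Mathlib

section
/- Let S be a signature, A and B two S-forest-like alphabets, and A ⊕ B their disjoint sum. For any reduced S-forest f = (t_1,…,t_k), any w' ∈ A*, and any w'' ∈ B*, the number of words w over the disjoint union A ⊔ B such that the subword of w consisting of letters of A is w', the subword consisting of letters of B is w'', and w ⊩^{A⊕B} f, equals the number of tuples ((s_1,ū_1),…,(s_k,ū_k)) with each s_m an S-term, each ū_m a tuple of ar(s_m) S-terms, t_m = s_m⟨ū_m⟩ for all m, such that w' ⊩^A rd(s_1 … s_k) and w'' ⊩^B rd(u_1 … u_k), where u_1 … u_k is the concatenation of the tuples ū_m. (This is the alphabet doubling property θ_{A,B} ∘ r_{A⊕B} = (r_A ⊗ r_B) ∘ Δ.) -/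
open scoped BigOperators

/-- An `S`-term over a signature given by a type `S` of generators with arity map `ar`. -/
inductive STerm (S : Type) (ar : S → ℕ) : Type
  | leaf : STerm S ar
  | node (g : S) (c : Fin (ar g) → STerm S ar) : STerm S ar

namespace STerm

variable {S : Type} {ar : S → ℕ}

/-- The arity of a term: its number of leaves. -/
def arity : STerm S ar → ℕ
  | leaf => 1
  | node _ c => ∑ i, (c i).arity

/-- The degree of a term: its number of internal nodes. -/
def degree : STerm S ar → ℕ
  | leaf => 0
  | node _ c => 1 + ∑ i, (c i).degree

/-- The word of decorations of internal nodes along left-to-right preorder traversal. -/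
def decs : STerm S ar → List S
  | leaf => []
  | node g c => g :: (List.ofFn fun i => (c i).decs).flatten

/-- Grafting `t⟨l⟩`: the `i`-th leaf (left-to-right) is replaced by the `i`-th entry of `l`. -/
def graftList : STerm S ar → List (STerm S ar) → STerm S ar
  | leaf, l => l.headD leaf
  | node g c, l =>
      node g fun i =>
        (c i).graftList
          ((l.drop (∑ j : Fin (ar g), if (j : ℕ) < (i : ℕ) then (c j).arity else 0)).take
            (c i).arity)

/-- Grafting a term at the rightmost leaf. -/
def graftRight : STerm S ar → STerm S ar → STerm S ar
  | leaf, s => s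
  | node g c, s => node g fun i => if (i : ℕ) = ar g - 1 then (c i).graftRight s else c i

/-- Grafting a term at the leftmost (first) leaf, i.e. `∘₁`. -/
def graftFirst : STerm S ar → STerm S ar → STerm S ar
  | leaf, s => s
  | node g c, s => node g fun i => if (i : ℕ) = 0 then (c i).graftFirst s else c i

/-- Preorder traversal word: `none` for leaves, `some g` for an internal node decorated by `g`. -/
def preo : STerm S ar → List (Option S)
  | leaf => [none]
  | node g c => some g :: (List.ofFn fun i => (c i).preo).flatten

/-- The number of extremal leaves of a term: leaves which come after every internal
node in the preorder traversal. -/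
def extremalCount (t : STerm S ar) : ℕ :=
  (t.preo.reverse.takeWhile fun o => o.isNone).length

/-- The list of edges `(i, j, i')` (`i'` is the `j`-th child of `i`, `j` being 1-based) between
internal nodes, internal nodes being numbered from `0` in preorder. -/
def edges : STerm S ar → List (ℕ × ℕ × ℕ)
  | leaf => []
  | node g c =>
      (List.ofFn fun i : Fin (ar g) =>
        (match c i with
          | leaf => ([] : List (ℕ × ℕ × ℕ))
          | node _ _ =>
            [(0, (i : ℕ) + 1,
               1 + ∑ j : Fin (ar g), if (j : ℕ) < (i : ℕ) then (c j).degree else 0)]) ++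
          (c i).edges.map fun e =>
            (e.1 + (1 + ∑ j : Fin (ar g), if (j : ℕ) < (i : ℕ) then (c j).degree else 0), e.2.1,
              e.2.2 + (1 + ∑ j : Fin (ar g), if (j : ℕ) < (i : ℕ) then (c j).degree else 0))).flatten

/-- The easterly wind move inside a term: a subterm rooted at an internal node which has an
immediate left sibling is detached (replaced by a leaf) and grafted onto the rightmost leaf of
the subtree rooted at this left sibling. -/
inductive TermMove : STerm S ar → STerm S ar → Prop
  | here (g : S) (c : Fin (ar g) → STerm S ar) (j j' : Fin (ar g))
      (hj : (j' : ℕ) = (j : ℕ) + 1) (hne : c j' ≠ leaf) :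
      TermMove (node g c)
        (node g (Function.update (Function.update c j ((c j).graftRight (c j'))) j' leaf))
  | child (g : S) (c : Fin (ar g) → STerm S ar) (i : Fin (ar g)) (t' : STerm S ar) :
      TermMove (c i) t' → TermMove (node g c) (node g (Function.update c i t'))

end STerm
section Forest

variable {S : Type} {ar : S → ℕ}

/-- A forest is reduced when none of its trees is a leaf. -/
def IsReducedF (f : List (STerm S ar)) : Prop := ∀ t ∈ f, t ≠ STerm.leaf

/-- The easterly wind move on forests: either the root of a tree having an immediate left
sibling tree is detached and grafted onto the rightmost leaf of this left sibling, or a move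
happens inside one of the trees. -/
inductive ForestMove : List (STerm S ar) → List (STerm S ar) → Prop
  | root (pre : List (STerm S ar)) (t t' : STerm S ar) (post : List (STerm S ar)) :
      t' ≠ STerm.leaf → ForestMove (pre ++ t :: t' :: post) (pre ++ t.graftRight t' :: post)
  | tree (pre : List (STerm S ar)) (t t' : STerm S ar) (post : List (STerm S ar)) :
      STerm.TermMove t t' → ForestMove (pre ++ t :: post) (pre ++ t' :: post)

/-- The relation `≼`: reflexive and transitive closure of the easterly wind move. -/
def EWLe (f f' : List (STerm S ar)) : Prop := Relation.ReflTransGen ForestMove f f'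

/-- Decoration word of a forest. -/
def forestDecs (f : List (STerm S ar)) : List S := (f.map STerm.decs).flatten

/-- Degree (number of internal nodes) of a forest. -/
def forestDeg (f : List (STerm S ar)) : ℕ := (f.map STerm.degree).sum

/-- Preorder indices (from 0) of the roots of the trees of a forest. -/
def rootIdxs : List (STerm S ar) → List ℕ
  | [] => []
  | t :: r => 0 :: (rootIdxs r).map (· + t.degree)

/-- Edges between internal nodes of a forest, numbered in preorder from 0. -/
def forestEdges : List (STerm S ar) → List (ℕ × ℕ × ℕ)
  | [] => []
  | t :: r => t.edges ++ (forestEdges r).map fun e => (e.1 + t.degree, e.2.1, e.2.2 + t.degree)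

/-- Grafting the terms of `l` onto the successive extremal leaves of `t`. -/
def underSub (t : STerm S ar) (l : List (STerm S ar)) : STerm S ar :=
  t.graftList (List.ofFn (n := t.arity) fun p =>
    if (p : ℕ) < t.arity - t.extremalCount then STerm.leaf
    else l.getD ((p : ℕ) - (t.arity - t.extremalCount)) STerm.leaf)

/-- The under product `f' △ f''` of two forests. -/
def underP (f' f'' : List (STerm S ar)) : List (STerm S ar) :=
  match f'.getLast? with
  | none => f''
  | some t => f'.dropLast ++ underSub t (f''.take t.extremalCount) :: f''.drop t.extremalCount

/-- The term `ι g` of degree 1 whose root is decorated by `g`. -/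
def iotaT (g : S) : STerm S ar := STerm.node g fun _ => STerm.leaf

/-- The minimal forest of the interval `W(w)`. -/
def fmin (w : List S) : List (STerm S ar) := w.map iotaT

/-- The maximal forest of the interval `W(w)`: `ι g₁ ∘₁ ι g₂ ∘₁ ⋯ ∘₁ ι g_ℓ`. -/
def fmax : List S → List (STerm S ar)
  | [] => []
  | g :: gs => [(gs.map iotaT).foldl STerm.graftFirst (iotaT g)]

end Forest
section Alphabet

variable {S : Type} {ar : S → ℕ}

/-- An `S`-forest-like alphabet: a type endowed with a root relation, decoration relations,
and edge relations. -/
structure ForestAlphabet (S : Type) (A : Type) where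
  Root : A → Prop
  Dec : S → A → Prop
  Edge : ℕ → A → A → Prop

/-- `f`-compatibility `w ⊩^A f` of a word `w` over a forest-like alphabet. -/
def ForestAlphabet.Compat {A : Type} (Al : ForestAlphabet S A) (w : List A)
    (f : List (STerm S ar)) : Prop :=
  w.length = forestDeg f ∧
  (∀ (i : ℕ) (hi : i < w.length), i ∈ rootIdxs f → Al.Root (w.get ⟨i, hi⟩)) ∧
  (∀ (i : ℕ) (hi : i < w.length) (hd : i < (forestDecs f).length),
      Al.Dec ((forestDecs f).get ⟨i, hd⟩) (w.get ⟨i, hi⟩)) ∧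
  (∀ p j q, (p, j, q) ∈ forestEdges f → ∀ (hp : p < w.length) (hq : q < w.length),
      Al.Edge j (w.get ⟨p, hp⟩) (w.get ⟨q, hq⟩))

/-- The disjoint sum of two forest-like alphabets. -/
def ForestAlphabet.dsum {A B : Type} (Al : ForestAlphabet S A) (Bl : ForestAlphabet S B) :
    ForestAlphabet S (A ⊕ B) where
  Root := Sum.elim Al.Root Bl.Root
  Dec g := Sum.elim (Al.Dec g) (Bl.Dec g)
  Edge j x y :=
    match x, y with
    | Sum.inl a, Sum.inl a' => Al.Edge j a a'
    | Sum.inr b, Sum.inr b' => Bl.Edge j b b'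
    | Sum.inl _, Sum.inr b => Bl.Root b
    | Sum.inr _, Sum.inl _ => False

/-- The alphabet `𝔸_S` with letters `a_{g,u}`, `g ∈ S`, `u ∈ ℕ*`. -/
def ASAlphabet (S : Type) : ForestAlphabet S (S × List ℕ) where
  Root a := ∃ ℓ, a.2 = List.replicate ℓ 0
  Dec g a := a.1 = g
  Edge j a a' := ∃ ℓ, a'.2 = a.2 ++ j :: List.replicate ℓ 0

/-- The alphabet `A_ℕ` with letters `a_i`, `i ∈ ℕ`, where every letter is a root, every letter
has every decoration, and `a_i →_j a_{i'}` iff `i < i'`. -/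
def ANAlphabet (S : Type) : ForestAlphabet S ℕ where
  Root _ := True
  Dec _ _ := True
  Edge _ i i' := i < i'

/-- The packing of a word of natural numbers. -/
def pck (w : List ℕ) : List ℕ :=
  w.map fun m => ((w.filter (· ≤ m)).dedup).length

end Alphabet
section Algebra

open scoped TensorProduct

variable {S : Type} {ar : S → ℕ}

/-- Reduced `S`-terms. -/
abbrev RTerm (S : Type) (ar : S → ℕ) := {t : STerm S ar // t ≠ STerm.leaf}

/-- The map `rd` keeping the non-leaf entries of a sequence of terms. -/
def rdF : List (STerm S ar) → List (RTerm S ar)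
  | [] => []
  | STerm.leaf :: r => rdF r
  | STerm.node g c :: r => ⟨STerm.node g c, fun h => nomatch h⟩ :: rdF r

/-- The natural Hopf algebra `N(S)` as a module: the monoid algebra of the free monoid on the
set of reduced `S`-terms. -/
abbrev NAlg (𝕂 : Type) [CommSemiring 𝕂] (S : Type) (ar : S → ℕ) :=
  MonoidAlgebra 𝕂 (FreeMonoid (RTerm S ar))

/-- The basis element `E_f` of `N(S)` indexed by a reduced forest `f`. -/
noncomputable def EBasis (𝕂 : Type) [CommSemiring 𝕂] {S : Type} {ar : S → ℕ}
    (f : List (RTerm S ar)) : NAlg 𝕂 S ar :=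
  MonoidAlgebra.of 𝕂 (FreeMonoid (RTerm S ar)) (FreeMonoid.ofList f)

/-- The coproduct `Δ` of `N(S)`, defined linearly on the basis by
`Δ E_f = Σ E_{rd(s₁…s_k)} ⊗ E_{rd(u₁…u_k)}`, the sum ranging over all factorizations
`t_m = s_m⟨ū_m⟩` of the entries of `f`. -/
noncomputable def DeltaN (𝕂 : Type) [CommSemiring 𝕂] (S : Type) (ar : S → ℕ) :
    NAlg 𝕂 S ar →ₗ[𝕂] (NAlg 𝕂 S ar) ⊗[𝕂] (NAlg 𝕂 S ar) :=
  (Finsupp.lift ((NAlg 𝕂 S ar) ⊗[𝕂] (NAlg 𝕂 S ar)) 𝕂 (FreeMonoid (RTerm S ar)) fun m =>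
    ∑ᶠ c ∈ {c : List (STerm S ar × List (STerm S ar)) |
        List.Forall₂ (fun p t => p.2.length = p.1.arity ∧ p.1.graftList p.2 = t.val) c
          (FreeMonoid.toList m)},
      (EBasis 𝕂 (rdF (c.map Prod.fst))) ⊗ₜ[𝕂] (EBasis 𝕂 (rdF (c.flatMap Prod.snd)))) ∘ₗ
    (MonoidAlgebra.coeffLinearEquiv 𝕂).toLinearMap

end Algebra

/-!
In the disjoint sum `A ⊕ B` no edge goes from a letter of `B` to a letter of `A`. The letters of `A`
in a compatible word therefore occupy an upper part `s` of each tree `t`, and the letters of `B` the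
terms `ū` grafted onto it, so that `t = s⟨ū⟩`. Recording along the preorder traversal whether a
letter belongs to `A` gives a boolean word which, `t` being known, determines `(s, ū)`, and which,
the two subwords being known, determines the compatible word. As a letter of `A` has an edge to a
letter of `B` exactly when the latter is a root, compatibility with `t` splits into compatibility of
the `A`-subword with `s` and of the `B`-subword with `ū`.
-/

section Blocks

variable {α β : Type*} {n : ℕ}

/-- The position at which the `i`-th block starts in a concatenation of `n` blocks of lengths
`d 0, …, d (n - 1)`. Unfolding it gives the sums used in `STerm.graftList` and `STerm.edges`. -/
def blockStart (d : Fin n → ℕ) (i : Fin n) : ℕ :=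
  ∑ j : Fin n, if (j : ℕ) < (i : ℕ) then d j else 0

theorem blockStart_zero (d : Fin (n + 1) → ℕ) : blockStart d 0 = 0 := by
  simp [blockStart]

theorem blockStart_succ (d : Fin (n + 1) → ℕ) (i : Fin n) :
    blockStart d i.succ = d 0 + blockStart (fun j => d j.succ) i := by
  simp [blockStart, Fin.sum_univ_succ]

theorem blockStart_add_le_sum (d : Fin n → ℕ) (i : Fin n) : blockStart d i + d i ≤ ∑ j, d j := by
  induction n with
  | zero => exact i.elim0
  | succ n ih =>
    rw [Fin.sum_univ_succ]
    cases i using Fin.cases with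
    | zero => simp [blockStart_zero]
    | succ i =>
      rw [blockStart_succ, add_assoc]
      exact Nat.add_le_add_left (ih (fun j => d j.succ) i) _

theorem take_drop_blockStart_flatten_ofFn {d : Fin n → ℕ} {us : Fin n → List α}
    (h : ∀ i, (us i).length = d i) (i : Fin n) :
    ((List.ofFn us).flatten.drop (blockStart d i)).take (d i) = us i := by
  induction n with
  | zero => exact i.elim0
  | succ n ih =>
    rw [List.ofFn_succ, List.flatten_cons]
    cases i using Fin.cases with
    | zero => rw [blockStart_zero, List.drop_zero, ← h 0, List.take_left]
    | succ i =>
      rw [blockStart_succ, ← h 0, ← List.drop_drop, List.drop_left]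
      exact ih (fun j => h j.succ) i

theorem flatten_ofFn_injective_of_length {us vs : Fin n → List α}
    (hlen : ∀ i, (us i).length = (vs i).length)
    (h : (List.ofFn us).flatten = (List.ofFn vs).flatten) : us = vs := by
  funext i
  rw [← take_drop_blockStart_flatten_ofFn hlen i, h,
    take_drop_blockStart_flatten_ofFn (fun _ => rfl) i]

theorem exists_eq_flatten_ofFn {d : Fin n → ℕ} {l : List α} (h : l.length = ∑ i, d i) :
    ∃ us : Fin n → List α, l = (List.ofFn us).flatten ∧ ∀ i, (us i).length = d i := by
  induction n generalizing l with
  | zero => exact ⟨fun i => i.elim0, by simpa using h, fun i => i.elim0⟩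
  | succ n ih =>
    rw [Fin.sum_univ_succ] at h
    obtain ⟨us, hflat, hlen⟩ := ih (d := fun j => d j.succ) (l := l.drop (d 0)) (by simp; omega)
    refine ⟨Fin.cons (l.take (d 0)) us, by simp [List.ofFn_succ, ← hflat], ?_⟩
    exact Fin.forall_fin_succ.2 ⟨by simp; omega, by simpa using hlen⟩

theorem length_flatten_ofFn (us : Fin n → List α) :
    (List.ofFn us).flatten.length = ∑ i, (us i).length := by
  simp [List.length_flatten, List.map_ofFn, List.sum_ofFn]

theorem count_flatten_ofFn [BEq α] (a : α) (us : Fin n → List α) :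
    (List.ofFn us).flatten.count a = ∑ i, (us i).count a := by
  simp [List.count_flatten, List.map_ofFn, List.sum_ofFn]

theorem map_flatten_ofFn (φ : α → β) (us : Fin n → List α) :
    (List.ofFn us).flatten.map φ = (List.ofFn fun i => (us i).map φ).flatten := by
  rw [List.map_flatten, List.map_ofFn]
  rfl

theorem filterMap_flatten_ofFn (φ : α → Option β) (us : Fin n → List α) :
    (List.ofFn us).flatten.filterMap φ = (List.ofFn fun i => (us i).filterMap φ).flatten := by
  rw [List.filterMap_flatten, List.map_ofFn]
  rfl

theorem exists_flatten_ofFn_of_map_eq {φ : α → β} {l : List α} {ms : Fin n → List β}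
    (h : l.map φ = (List.ofFn ms).flatten) :
    ∃ us : Fin n → List α, l = (List.ofFn us).flatten ∧ ∀ i, (us i).map φ = ms i := by
  obtain ⟨us, rfl, hlen⟩ := exists_eq_flatten_ofFn (d := fun i => (ms i).length) (l := l)
    (by rw [← length_flatten_ofFn, ← h, List.length_map])
  rw [map_flatten_ofFn] at h
  exact ⟨us, rfl, congrFun (flatten_ofFn_injective_of_length (by simpa using hlen) h)⟩

theorem forall₂_append_iff_of_length_eq {R : α → β → Prop} {l₁ l₂ : List α} {m₁ m₂ : List β}
    (h : l₁.length = m₁.length) :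
    List.Forall₂ R (l₁ ++ l₂) (m₁ ++ m₂) ↔ List.Forall₂ R l₁ m₁ ∧ List.Forall₂ R l₂ m₂ := by
  refine ⟨fun H => ⟨?_, ?_⟩, fun H => List.rel_append H.1 H.2⟩
  · simpa [h] using List.forall₂_take l₁.length H
  · simpa [h] using List.forall₂_drop l₁.length H

theorem forall₂_flatten_ofFn_iff {R : α → β → Prop} {us : Fin n → List α} {vs : Fin n → List β}
    (h : ∀ i, (us i).length = (vs i).length) :
    List.Forall₂ R (List.ofFn us).flatten (List.ofFn vs).flatten ↔
      ∀ i, List.Forall₂ R (us i) (vs i) := by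
  induction n with
  | zero => simp
  | succ n ih =>
    rw [List.ofFn_succ, List.ofFn_succ, List.flatten_cons, List.flatten_cons,
      forall₂_append_iff_of_length_eq (h 0), ih fun i => h i.succ, Fin.forall_fin_succ]

end Blocks

namespace STerm

variable {S : Type} {ar : S → ℕ}

theorem degree_pos {t : STerm S ar} (ht : t ≠ leaf) : 0 < t.degree := by
  cases t with
  | leaf => exact absurd rfl ht
  | node g c => exact Nat.add_pos_left Nat.one_pos _

theorem length_decs (t : STerm S ar) : t.decs.length = t.degree := by
  induction t with
  | leaf => rfl
  | node g c ih => simp only [decs, degree, List.length_cons, length_flatten_ofFn, ih, add_comm]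

/-- The edge joining node `0` to its `j`-th child `t`, whose internal nodes are numbered from `n`.
There is none when `t` is a leaf, since leaves are not numbered. -/
def childEdge (j n : ℕ) : STerm S ar → List (ℕ × ℕ × ℕ)
  | leaf => []
  | node _ _ => [(0, j, n)]

/-- The list of edges `E` with its positions translated by `n`. -/
def shiftEdges (n : ℕ) (E : List (ℕ × ℕ × ℕ)) : List (ℕ × ℕ × ℕ) :=
  E.map fun e => (e.1 + n, e.2.1, e.2.2 + n)

theorem edges_node (g : S) (c : Fin (ar g) → STerm S ar) :
    (node g c).edges = (List.ofFn fun i : Fin (ar g) =>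
      childEdge (i + 1) (1 + blockStart (fun j => (c j).degree) i) (c i) ++
        shiftEdges (1 + blockStart (fun j => (c j).degree) i) (c i).edges).flatten :=
  rfl

theorem eq_of_mem_childEdge {j n : ℕ} {t : STerm S ar} {e : ℕ × ℕ × ℕ}
    (he : e ∈ childEdge j n t) : t ≠ leaf ∧ e = (0, j, n) := by
  cases t with
  | leaf => exact absurd he List.not_mem_nil
  | node g c => exact ⟨nofun, List.mem_singleton.1 he⟩

theorem lt_degree_of_mem_edges {t : STerm S ar} {e : ℕ × ℕ × ℕ} (he : e ∈ t.edges) :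
    e.1 < t.degree ∧ e.2.2 < t.degree := by
  induction t generalizing e with
  | leaf => exact absurd he List.not_mem_nil
  | node g c ih =>
    simp only [edges_node, List.mem_flatten, List.mem_ofFn, exists_exists_eq_and,
      List.mem_append] at he
    obtain ⟨i, he⟩ := he
    have hi := blockStart_add_le_sum (fun j => (c j).degree) i
    simp only [degree]
    obtain he | he := he
    · obtain ⟨hleaf, rfl⟩ := eq_of_mem_childEdge he
      have := degree_pos hleaf
      grind
    · obtain ⟨e', he', rfl⟩ := List.mem_map.1 he
      have := ih i he'
      grind

end STerm

section Forest

variable {S : Type} {ar : S → ℕ}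

theorem forestDeg_cons (t : STerm S ar) (f : List (STerm S ar)) :
    forestDeg (t :: f) = t.degree + forestDeg f := by
  simp [forestDeg]

theorem forestDecs_cons (t : STerm S ar) (f : List (STerm S ar)) :
    forestDecs (t :: f) = t.decs ++ forestDecs f := by
  simp [forestDecs]

theorem length_forestDecs (f : List (STerm S ar)) : (forestDecs f).length = forestDeg f := by
  induction f with
  | nil => rfl
  | cons t f ih => rw [forestDecs_cons, forestDeg_cons, List.length_append, t.length_decs, ih]

theorem forestDeg_append (f₁ f₂ : List (STerm S ar)) :
    forestDeg (f₁ ++ f₂) = forestDeg f₁ + forestDeg f₂ := by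
  simp [forestDeg]

theorem forestDeg_flatten_ofFn {n : ℕ} (us : Fin n → List (STerm S ar)) :
    forestDeg (List.ofFn us).flatten = ∑ i, forestDeg (us i) := by
  simp only [forestDeg, map_flatten_ofFn, List.sum_flatten, List.map_ofFn, List.sum_ofFn,
    Function.comp_apply]

end Forest

namespace ForestAlphabet

variable {S : Type} {ar : S → ℕ} {A : Type} (Al : ForestAlphabet S A)

/-- Letters of `w` joined by an edge of the list `E`, given in the format of `STerm.edges`, satisfy
the edge relation of the alphabet. Positions outside of `w` impose no condition. -/
def EdgesHold (E : List (ℕ × ℕ × ℕ)) (w : List A) : Prop :=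
  ∀ e ∈ E, ∀ a ∈ w[e.1]?, ∀ b ∈ w[e.2.2]?, Al.Edge e.2.1 a b

variable {Al}

theorem edgesHold_append {E F : List (ℕ × ℕ × ℕ)} {w : List A} :
    Al.EdgesHold (E ++ F) w ↔ Al.EdgesHold E w ∧ Al.EdgesHold F w :=
  List.forall_mem_append

theorem edgesHold_flatten_ofFn {n : ℕ} {E : Fin n → List (ℕ × ℕ × ℕ)} {w : List A} :
    Al.EdgesHold (List.ofFn E).flatten w ↔ ∀ i, Al.EdgesHold (E i) w := by
  induction n with
  | zero => simp [EdgesHold]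
  | succ n ih =>
    rw [List.ofFn_succ, List.flatten_cons, edgesHold_append, ih, Fin.forall_fin_succ]

theorem edgesHold_shiftEdges {n : ℕ} {E : List (ℕ × ℕ × ℕ)} {w : List A} :
    Al.EdgesHold (STerm.shiftEdges n E) w ↔ Al.EdgesHold E (w.drop n) := by
  simp only [EdgesHold, STerm.shiftEdges, List.forall_mem_map, List.getElem?_drop, Nat.add_comm n]

theorem edgesHold_take {n : ℕ} {E : List (ℕ × ℕ × ℕ)} (hE : ∀ e ∈ E, e.1 < n ∧ e.2.2 < n)
    {w : List A} : Al.EdgesHold E (w.take n) ↔ Al.EdgesHold E w := by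
  refine forall₂_congr fun e he => ?_
  rw [List.getElem?_take_of_lt (hE e he).1, List.getElem?_take_of_lt (hE e he).2]

theorem edgesHold_childEdge {j n : ℕ} {t : STerm S ar} {w : List A} :
    Al.EdgesHold (STerm.childEdge j n t) w ↔
      ∀ a ∈ w[0]?, ∀ b ∈ ((w.drop n).take t.degree).head?, Al.Edge j a b := by
  cases t with
  | leaf => simp [EdgesHold, STerm.childEdge, STerm.degree]
  | node g c => simp [EdgesHold, STerm.childEdge, STerm.degree, List.head?_take]

theorem edgesHold_node {g : S} {c : Fin (ar g) → STerm S ar} {a : A} {ws : Fin (ar g) → List A}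
    (hws : ∀ i, (ws i).length = (c i).degree) :
    Al.EdgesHold (STerm.node g c).edges (a :: (List.ofFn ws).flatten) ↔
      ∀ i : Fin (ar g), (∀ b ∈ (ws i).head?, Al.Edge (i + 1) a b) ∧
        Al.EdgesHold (c i).edges (ws i) := by
  rw [STerm.edges_node, edgesHold_flatten_ofFn]
  refine forall_congr' fun i => ?_
  have hblock : ((a :: (List.ofFn ws).flatten).drop
      (1 + blockStart (fun j => (c j).degree) i)).take (c i).degree = ws i := by
    rw [Nat.add_comm, List.drop_succ_cons, take_drop_blockStart_flatten_ofFn hws i]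
  rw [edgesHold_append, edgesHold_childEdge, edgesHold_shiftEdges,
    ← edgesHold_take fun _ => STerm.lt_degree_of_mem_edges, hblock]
  simp

variable (Al)

/-- Positional compatibility of a word with a term, where the letter of the root is only required
to satisfy `P`. -/
def PosCompat (P : A → Prop) (t : STerm S ar) (w : List A) : Prop :=
  w.length = t.degree ∧ (∀ a ∈ w.head?, P a) ∧ List.Forall₂ Al.Dec t.decs w ∧
    Al.EdgesHold t.edges w

/-- Compatibility of a word with a term by recursion on the term: the word is cut into the letter
of the root, required to satisfy `P`, and one word for each child, whose own root is then required
to be joined to that letter. -/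
def TermCompat : (A → Prop) → STerm S ar → List A → Prop
  | _, .leaf, w => w = []
  | P, .node g c, w => ∃ (a : A) (ws : Fin (ar g) → List A), w = a :: (List.ofFn ws).flatten ∧
      P a ∧ Al.Dec g a ∧ ∀ i : Fin (ar g), TermCompat (Al.Edge (i + 1) a) (c i) (ws i)

/-- Compatibility of a word with a forest by recursion on the forest. Leaf entries read the empty
word, so that the forest need not be reduced. -/
def ForestCompat : List (STerm S ar) → List A → Prop
  | [], w => w = []
  | t :: f, w => ∃ w₁ w₂, w = w₁ ++ w₂ ∧ Al.TermCompat Al.Root t w₁ ∧ ForestCompat f w₂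

variable {Al}

theorem posCompat_node_iff {P : A → Prop} {g : S} {c : Fin (ar g) → STerm S ar} {a : A}
    {ws : Fin (ar g) → List A} (hws : ∀ i, (ws i).length = (c i).degree) :
    Al.PosCompat P (.node g c) (a :: (List.ofFn ws).flatten) ↔
      P a ∧ Al.Dec g a ∧ ∀ i : Fin (ar g), Al.PosCompat (Al.Edge (i + 1) a) (c i) (ws i) := by
  have hlen : (a :: (List.ofFn ws).flatten).length = (STerm.node g c).degree := by
    simp only [List.length_cons, length_flatten_ofFn, hws, STerm.degree, add_comm]
  have hdecs : List.Forall₂ Al.Dec (STerm.node g c).decs (a :: (List.ofFn ws).flatten) ↔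
      Al.Dec g a ∧ ∀ i, List.Forall₂ Al.Dec (c i).decs (ws i) := by
    rw [STerm.decs, List.forall₂_cons,
      forall₂_flatten_ofFn_iff fun i => by rw [STerm.length_decs, hws]]
  simp only [PosCompat, hlen, hdecs, edgesHold_node hws, hws, true_and, List.head?_cons,
    Option.mem_some_iff, forall_eq', forall_and]
  tauto

theorem posCompat_iff_termCompat {P : A → Prop} {t : STerm S ar} {w : List A} :
    Al.PosCompat P t w ↔ Al.TermCompat P t w := by
  induction t generalizing P w with
  | leaf =>
    refine ⟨fun h => List.length_eq_zero_iff.1 h.1, ?_⟩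
    rintro rfl
    simp [PosCompat, EdgesHold, STerm.degree, STerm.decs, STerm.edges]
  | node g c ih =>
    simp only [TermCompat, ← ih]
    constructor
    · intro h
      have hpos : 0 < w.length := h.1.symm ▸ STerm.degree_pos nofun
      obtain ⟨a, v, rfl⟩ := List.exists_cons_of_length_pos hpos
      obtain ⟨ws, rfl, hws⟩ := exists_eq_flatten_ofFn (d := fun i => (c i).degree) (l := v)
        (by simpa [STerm.degree, Nat.add_comm 1] using h.1)
      exact ⟨a, ws, rfl, (posCompat_node_iff hws).1 h⟩
    · rintro ⟨a, ws, rfl, h⟩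
      exact (posCompat_node_iff fun i => (h.2.2 i).1).2 h

theorem compat_iff_edgesHold {w : List A} {f : List (STerm S ar)} :
    Al.Compat w f ↔ w.length = forestDeg f ∧ (∀ i ∈ rootIdxs f, ∀ a ∈ w[i]?, Al.Root a) ∧
      List.Forall₂ Al.Dec (forestDecs f) w ∧ Al.EdgesHold (forestEdges f) w := by
  simp only [Compat, EdgesHold, List.forall₂_iff_get, length_forestDecs, Option.mem_def,
    List.getElem?_eq_some_iff, List.get_eq_getElem, Prod.forall, forall_exists_index]
  grind

theorem compat_cons_append {t : STerm S ar} (ht : t ≠ .leaf) {f : List (STerm S ar)}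
    {w₁ w₂ : List A} (hw₁ : w₁.length = t.degree) :
    Al.Compat (w₁ ++ w₂) (t :: f) ↔ Al.PosCompat Al.Root t w₁ ∧ Al.Compat w₂ f := by
  have hroots : (∀ i ∈ rootIdxs (t :: f), ∀ a ∈ (w₁ ++ w₂)[i]?, Al.Root a) ↔
      (∀ a ∈ w₁.head?, Al.Root a) ∧ ∀ i ∈ rootIdxs f, ∀ a ∈ w₂[i]?, Al.Root a := by
    have hpos : 0 < w₁.length := hw₁ ▸ STerm.degree_pos ht
    simp only [rootIdxs, List.forall_mem_cons, List.forall_mem_map, ← hw₁,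
      List.getElem?_append_left hpos, List.getElem?_append_right (Nat.le_add_left _ _),
      Nat.add_sub_cancel, List.head?_eq_getElem?]
  have hdecs : List.Forall₂ Al.Dec (forestDecs (t :: f)) (w₁ ++ w₂) ↔
      List.Forall₂ Al.Dec t.decs w₁ ∧ List.Forall₂ Al.Dec (forestDecs f) w₂ := by
    rw [forestDecs_cons, forall₂_append_iff_of_length_eq (t.length_decs.trans hw₁.symm)]
  have hedges : Al.EdgesHold (forestEdges (t :: f)) (w₁ ++ w₂) ↔
      Al.EdgesHold t.edges w₁ ∧ Al.EdgesHold (forestEdges f) w₂ := by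
    rw [forestEdges, edgesHold_append, ← edgesHold_take fun _ => STerm.lt_degree_of_mem_edges,
      ← STerm.shiftEdges, edgesHold_shiftEdges, ← hw₁, List.take_left, List.drop_left]
  rw [compat_iff_edgesHold, compat_iff_edgesHold, PosCompat, hroots, hdecs, hedges, forestDeg_cons,
    List.length_append, hw₁, Nat.add_left_cancel_iff]
  tauto

theorem compat_iff_forestCompat {f : List (STerm S ar)} (hf : IsReducedF f) {w : List A} :
    Al.Compat w f ↔ Al.ForestCompat f w := by
  induction f generalizing w with
  | nil =>
    refine ⟨fun h => List.length_eq_zero_iff.1 h.1, ?_⟩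
    rintro rfl
    simp [Compat, forestDeg, forestEdges]
  | cons t f ih =>
    obtain ⟨ht, hf⟩ := List.forall_mem_cons.1 hf
    simp only [ForestCompat, ← ih hf, ← posCompat_iff_termCompat]
    constructor
    · intro h
      have hlen : w.length = t.degree + forestDeg f := h.1.trans (forestDeg_cons t f)
      have hw : (w.take t.degree).length = t.degree := List.length_take_of_le (by omega)
      refine ⟨_, _, (List.take_append_drop t.degree w).symm, (compat_cons_append ht hw).1 ?_⟩
      rwa [List.take_append_drop]
    · rintro ⟨w₁, w₂, rfl, h⟩
      exact (compat_cons_append ht h.1.1).2 h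

theorem forestCompat_rdF_iff {f : List (STerm S ar)} {w : List A} :
    Al.ForestCompat ((rdF f).map Subtype.val) w ↔ Al.ForestCompat f w := by
  induction f generalizing w with
  | nil => rfl
  | cons t f ih =>
    cases t with
    | leaf => rw [rdF, ih]; simp [ForestCompat, TermCompat]
    | node g c => simp only [rdF, ForestCompat, List.map_cons, ih]

theorem compat_rdF_iff {f : List (STerm S ar)} {w : List A} :
    Al.Compat w ((rdF f).map Subtype.val) ↔ Al.ForestCompat f w := by
  have hreduced : IsReducedF ((rdF f).map Subtype.val) := List.forall_mem_map.2 fun t _ => t.2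
  rw [compat_iff_forestCompat hreduced, forestCompat_rdF_iff]

theorem TermCompat.length_eq {P : A → Prop} {t : STerm S ar} {w : List A}
    (h : Al.TermCompat P t w) : w.length = t.degree :=
  (posCompat_iff_termCompat.2 h).1

theorem ForestCompat.length_eq {f : List (STerm S ar)} {w : List A} (h : Al.ForestCompat f w) :
    w.length = forestDeg f := by
  induction f generalizing w with
  | nil => exact List.length_eq_zero_iff.2 h
  | cons t f ih =>
    obtain ⟨w₁, w₂, rfl, h₁, h₂⟩ := h
    rw [List.length_append, h₁.length_eq, ih h₂, forestDeg_cons]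

theorem termCompat_node_iff {P : A → Prop} {g : S} {c : Fin (ar g) → STerm S ar} {a : A}
    {ws : Fin (ar g) → List A} (hws : ∀ i, (ws i).length = (c i).degree) :
    Al.TermCompat P (.node g c) (a :: (List.ofFn ws).flatten) ↔
      P a ∧ Al.Dec g a ∧ ∀ i : Fin (ar g), Al.TermCompat (Al.Edge (i + 1) a) (c i) (ws i) := by
  simp only [← posCompat_iff_termCompat, posCompat_node_iff hws]

theorem forestCompat_cons_append {t : STerm S ar} {f : List (STerm S ar)} {w₁ w₂ : List A}
    (hw₁ : w₁.length = t.degree) :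
    Al.ForestCompat (t :: f) (w₁ ++ w₂) ↔ Al.TermCompat Al.Root t w₁ ∧ Al.ForestCompat f w₂ := by
  refine ⟨?_, fun h => ⟨w₁, w₂, rfl, h⟩⟩
  rintro ⟨v₁, v₂, heq, h₁, h₂⟩
  obtain ⟨rfl, rfl⟩ := List.append_inj heq (hw₁.trans h₁.length_eq.symm)
  exact ⟨h₁, h₂⟩

theorem forestCompat_append {f₁ f₂ : List (STerm S ar)} {w₁ w₂ : List A}
    (hw₁ : w₁.length = forestDeg f₁) :
    Al.ForestCompat (f₁ ++ f₂) (w₁ ++ w₂) ↔ Al.ForestCompat f₁ w₁ ∧ Al.ForestCompat f₂ w₂ := by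
  induction f₁ generalizing w₁ with
  | nil =>
    obtain rfl := List.length_eq_zero_iff.1 hw₁
    simp [ForestCompat]
  | cons t f₁ ih =>
    rw [forestDeg_cons] at hw₁
    obtain ⟨v₁, v₂, rfl, hv₁⟩ : ∃ v₁ v₂, w₁ = v₁ ++ v₂ ∧ v₁.length = t.degree :=
      ⟨_, _, (List.take_append_drop t.degree w₁).symm, List.length_take_of_le (by omega)⟩
    rw [List.length_append, hv₁, Nat.add_left_cancel_iff] at hw₁
    rw [List.cons_append, List.append_assoc, forestCompat_cons_append hv₁,
      forestCompat_cons_append hv₁, ih hw₁, and_assoc]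

theorem forestCompat_flatten_ofFn {n : ℕ} {us : Fin n → List (STerm S ar)} {ws : Fin n → List A}
    (hws : ∀ i, (ws i).length = forestDeg (us i)) :
    Al.ForestCompat (List.ofFn us).flatten (List.ofFn ws).flatten ↔
      ∀ i, Al.ForestCompat (us i) (ws i) := by
  induction n with
  | zero => simp [ForestCompat]
  | succ n ih =>
    rw [List.ofFn_succ, List.ofFn_succ, List.flatten_cons, List.flatten_cons,
      forestCompat_append (hws 0), ih fun i => hws i.succ, Fin.forall_fin_succ]

end ForestAlphabet

section Words

variable {A B : Type}

/-- The subword of the letters of `A` in a word over `A ⊕ B`. -/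
abbrev leftSubword (w : List (A ⊕ B)) : List A := w.filterMap Sum.getLeft?

/-- The subword of the letters of `B` in a word over `A ⊕ B`. -/
abbrev rightSubword (w : List (A ⊕ B)) : List B := w.filterMap Sum.getRight?

theorem leftSubword_map_inr (v : List B) : leftSubword (v.map (Sum.inr : B → A ⊕ B)) = [] := by
  simp [leftSubword]

theorem rightSubword_map_inr (v : List B) : rightSubword (v.map (Sum.inr : B → A ⊕ B)) = v := by
  simp [rightSubword, List.filterMap_map, Function.comp_def]

theorem length_leftSubword (w : List (A ⊕ B)) :
    (leftSubword w).length = (w.map Sum.isLeft).count true := by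
  induction w with
  | nil => rfl
  | cons x w ih => cases x <;> simpa [List.filterMap_cons] using ih

theorem length_rightSubword (w : List (A ⊕ B)) :
    (rightSubword w).length = (w.map Sum.isLeft).count false := by
  induction w with
  | nil => rfl
  | cons x w ih => cases x <;> simpa [List.filterMap_cons] using ih

theorem exists_eq_map_inr_of_map_isLeft {w : List (A ⊕ B)} {n : ℕ}
    (h : w.map Sum.isLeft = List.replicate n false) : ∃ v : List B, w = v.map Sum.inr := by
  have hmem : w ∈ Set.range (List.map (Sum.inr : B → A ⊕ B)) := by
    rw [Set.range_list_map, Set.range_inr]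
    intro x hx
    have hleft : x.isLeft = false := List.eq_of_mem_replicate (h ▸ List.mem_map_of_mem hx)
    simpa using hleft
  obtain ⟨v, rfl⟩ := hmem
  exact ⟨v, rfl⟩

theorem eq_of_map_isLeft_eq {w v : List (A ⊕ B)} (hmask : w.map Sum.isLeft = v.map Sum.isLeft)
    (hleft : leftSubword w = leftSubword v) (hright : rightSubword w = rightSubword v) :
    w = v := by
  induction w generalizing v with
  | nil => simpa using hmask.symm
  | cons x w ih =>
    obtain - | ⟨y, v⟩ := v
    · simp at hmask
    · obtain ⟨hhead, htail⟩ := List.cons.inj hmask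
      obtain a | b := x <;> obtain a' | b' := y
      · obtain ⟨rfl, hleft'⟩ := List.cons.inj hleft
        rw [ih htail hleft' hright]
      · exact absurd hhead nofun
      · exact absurd hhead nofun
      · obtain ⟨rfl, hright'⟩ := List.cons.inj hright
        rw [ih htail hleft hright']

theorem exists_map_isLeft_eq {m : List Bool} {w' : List A} {w'' : List B}
    (hleft : w'.length = m.count true) (hright : w''.length = m.count false) :
    ∃ w : List (A ⊕ B), w.map Sum.isLeft = m ∧ leftSubword w = w' ∧ rightSubword w = w'' := by
  induction m generalizing w' w'' with
  | nil => exact ⟨[], by simp_all⟩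
  | cons b m ih =>
    cases b with
    | true =>
      obtain ⟨a, w', rfl⟩ := List.exists_cons_of_length_pos (l := w') (by simp [hleft])
      obtain ⟨w, rfl, rfl, rfl⟩ := ih (w' := w') (by simpa using hleft) (by simpa using hright)
      exact ⟨Sum.inl a :: w, rfl, rfl, rfl⟩
    | false =>
      obtain ⟨b, w'', rfl⟩ := List.exists_cons_of_length_pos (l := w'') (by simp [hright])
      obtain ⟨w, rfl, rfl, rfl⟩ := ih (w'' := w'') (by simpa using hleft) (by simpa using hright)
      exact ⟨Sum.inr b :: w, rfl, rfl, rfl⟩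

end Words

namespace STerm

variable {S : Type} {ar : S → ℕ}

theorem graftList_node {g : S} {c : Fin (ar g) → STerm S ar} {us : Fin (ar g) → List (STerm S ar)}
    (hus : ∀ i, (us i).length = (c i).arity) :
    (node g c).graftList (List.ofFn us).flatten = node g fun i => (c i).graftList (us i) := by
  rw [graftList]
  congr! 2 with i
  exact congrArg _ (take_drop_blockStart_flatten_ofFn hus i)

/-- The word telling, for each internal node of `s⟨u⟩` in preorder, whether it comes from `s`. -/
def graftMask : STerm S ar → List (STerm S ar) → List Bool
  | leaf, u => List.replicate (u.headD leaf).degree false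
  | node _ c, u =>
      true :: (List.ofFn fun i => (c i).graftMask
        ((u.drop (blockStart (fun j => (c j).arity) i)).take (c i).arity)).flatten

theorem graftMask_node {g : S} {c : Fin (ar g) → STerm S ar} {us : Fin (ar g) → List (STerm S ar)}
    (hus : ∀ i, (us i).length = (c i).arity) :
    (node g c).graftMask (List.ofFn us).flatten =
      true :: (List.ofFn fun i => (c i).graftMask (us i)).flatten := by
  simp only [graftMask, take_drop_blockStart_flatten_ofFn hus]

@[elab_as_elim]
theorem graft_induction
    {motive : (s : STerm S ar) → (u : List (STerm S ar)) → u.length = s.arity → Prop}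
    (leaf : ∀ t, motive leaf [t] rfl)
    (node : ∀ (g : S) (c : Fin (ar g) → STerm S ar) (us : Fin (ar g) → List (STerm S ar))
      (hu : (List.ofFn us).flatten.length = (node g c).arity)
      (hus : ∀ i, (us i).length = (c i).arity), (∀ i, motive (c i) (us i) (hus i)) →
      motive (node g c) (List.ofFn us).flatten hu)
    (s : STerm S ar) (u : List (STerm S ar)) (hu : u.length = s.arity) : motive s u hu := by
  induction s generalizing u with
  | leaf =>
    obtain ⟨t, rfl⟩ := List.length_eq_one_iff.1 hu
    exact leaf t
  | node g c ih =>
    obtain ⟨us, rfl, hus⟩ := exists_eq_flatten_ofFn hu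
    exact node g c us hu hus fun i => ih i (us i) (hus i)

variable {s : STerm S ar} {u : List (STerm S ar)}

theorem length_graftMask (hu : u.length = s.arity) :
    (s.graftMask u).length = (s.graftList u).degree := by
  induction s, u, hu using graft_induction with
  | leaf t => simp [graftMask, graftList]
  | node g c us _ hus ih =>
    simp only [graftMask_node hus, graftList_node hus, degree, List.length_cons,
      length_flatten_ofFn, ih, add_comm]

theorem count_true_graftMask (hu : u.length = s.arity) :
    (s.graftMask u).count true = s.degree := by
  induction s, u, hu using graft_induction with
  | leaf t => simp [graftMask, degree, List.count_replicate]
  | node g c us _ hus ih =>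
    simp only [graftMask_node hus, degree, List.count_cons_self, count_flatten_ofFn, ih, add_comm]

theorem count_false_graftMask (hu : u.length = s.arity) :
    (s.graftMask u).count false = forestDeg u := by
  induction s, u, hu using graft_induction with
  | leaf t => simp [graftMask, forestDeg]
  | node g c us _ hus ih =>
    simp [graftMask_node hus, forestDeg_flatten_ofFn, count_flatten_ofFn, ih]

theorem replicate_false_ne_graftMask_node {n : ℕ} {g : S} {c : Fin (ar g) → STerm S ar}
    {us : List (STerm S ar)} : List.replicate n false ≠ (node g c).graftMask us := by
  cases n <;> simp [graftMask, List.replicate_succ]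

theorem eq_of_graftMask_eq {s' : STerm S ar} {u' : List (STerm S ar)} (hu : u.length = s.arity)
    (hu' : u'.length = s'.arity) (hgraft : s.graftList u = s'.graftList u')
    (hmask : s.graftMask u = s'.graftMask u') : s = s' ∧ u = u' := by
  induction s, u, hu using graft_induction generalizing s' u' with
  | leaf t =>
    cases s' with
    | leaf =>
      obtain ⟨t', rfl⟩ := List.length_eq_one_iff.1 hu'
      exact ⟨rfl, congrArg (fun t => [t]) hgraft⟩
    | node g' c' => exact absurd hmask replicate_false_ne_graftMask_node
  | node g c us _ hus ih =>
    cases s' with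
    | leaf => exact absurd hmask.symm replicate_false_ne_graftMask_node
    | node g' c' =>
      obtain ⟨us', rfl, hus'⟩ := exists_eq_flatten_ofFn hu'
      rw [graftList_node hus, graftList_node hus', node.injEq] at hgraft
      obtain ⟨rfl, hgraft⟩ := hgraft
      have hgraft := congrFun (eq_of_heq hgraft)
      rw [graftMask_node hus, graftMask_node hus', List.cons.injEq] at hmask
      have hmask := congrFun <| flatten_ofFn_injective_of_length
        (fun i => by rw [length_graftMask (hus i), hgraft, length_graftMask (hus' i)]) hmask.2
      have hchild := fun i => ih i (hus' i) (hgraft i) (hmask i)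
      obtain rfl : c = c' := funext fun i => (hchild i).1
      obtain rfl : us = us' := funext fun i => (hchild i).2
      exact ⟨rfl, rfl⟩

end STerm

namespace ForestAlphabet

variable {S : Type} {ar : S → ℕ} {A B : Type} {Al : ForestAlphabet S A} {Bl : ForestAlphabet S B}

theorem dsum_root : (Al.dsum Bl).Root = Sum.elim Al.Root Bl.Root :=
  rfl

theorem dsum_dec (g : S) : (Al.dsum Bl).Dec g = Sum.elim (Al.Dec g) (Bl.Dec g) :=
  rfl

theorem dsum_edge_inl (j : ℕ) (a : A) :
    (Al.dsum Bl).Edge j (Sum.inl a) = Sum.elim (Al.Edge j a) Bl.Root := by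
  funext x
  cases x <;> rfl

theorem dsum_edge_inr (j : ℕ) (b : B) :
    (Al.dsum Bl).Edge j (Sum.inr b) = Sum.elim (fun _ => False) (Bl.Edge j b) := by
  funext x
  cases x <;> rfl

theorem TermCompat.exists_eq_map_inr {Q : B → Prop} {t : STerm S ar} {w : List (A ⊕ B)}
    (h : (Al.dsum Bl).TermCompat (Sum.elim (fun _ => False) Q) t w) :
    ∃ v : List B, w = v.map Sum.inr := by
  induction t generalizing Q w with
  | leaf => exact ⟨[], h⟩
  | node g c ih =>
    obtain ⟨a | b, ws, rfl, hroot, -, hchild⟩ := h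
    · exact hroot.elim
    · simp only [dsum_edge_inr] at hchild
      choose vs hvs using fun i => ih i (hchild i)
      obtain rfl : ws = fun i => (vs i).map Sum.inr := funext hvs
      exact ⟨b :: (List.ofFn vs).flatten, by rw [List.map_cons, map_flatten_ofFn]⟩

theorem termCompat_map_inr_iff {P : A → Prop} {Q : B → Prop} {t : STerm S ar} {v : List B} :
    (Al.dsum Bl).TermCompat (Sum.elim P Q) t (v.map Sum.inr) ↔ Bl.TermCompat Q t v := by
  induction t generalizing P Q v with
  | leaf => exact List.map_eq_nil_iff
  | node g c ih =>
    constructor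
    · rintro ⟨x, ws, hv, hroot, hdec, hchild⟩
      obtain ⟨b, v, rfl, rfl, htail⟩ := List.map_eq_cons_iff.1 hv
      obtain ⟨vs, rfl, hvs⟩ := exists_flatten_ofFn_of_map_eq htail
      simp only [dsum_edge_inr, ← hvs, ih] at hchild
      exact ⟨b, vs, rfl, hroot, hdec, hchild⟩
    · rintro ⟨b, vs, rfl, hroot, hdec, hchild⟩
      refine ⟨Sum.inr b, fun i => (vs i).map Sum.inr, ?_, hroot, hdec, fun i => ?_⟩
      · rw [List.map_cons, map_flatten_ofFn]
      · simpa only [dsum_edge_inr, ih] using hchild i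

theorem TermCompat.exists_graftMask_eq {P : A → Prop} {t : STerm S ar} {w : List (A ⊕ B)}
    (h : (Al.dsum Bl).TermCompat (Sum.elim P Bl.Root) t w) :
    ∃ (s : STerm S ar) (u : List (STerm S ar)), u.length = s.arity ∧ s.graftList u = t ∧
      w.map Sum.isLeft = s.graftMask u := by
  induction t generalizing P w with
  | leaf =>
    obtain rfl : w = [] := h
    exact ⟨.leaf, [.leaf], rfl, rfl, rfl⟩
  | node g c ih =>
    obtain ⟨a | b, ws, rfl, hroot, hdec, hchild⟩ := h
    · simp only [dsum_edge_inl] at hchild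
      choose cs us hus hgraft hmask using fun i => ih i (hchild i)
      refine ⟨.node g cs, (List.ofFn us).flatten, ?_, ?_, ?_⟩
      · simp only [length_flatten_ofFn, STerm.arity, hus]
      · simp only [STerm.graftList_node hus, hgraft]
      · simp only [STerm.graftMask_node hus, List.map_cons, map_flatten_ofFn, hmask,
          Sum.isLeft_inl]
    · have hright : (Al.dsum Bl).TermCompat (Sum.elim (fun _ => False) Bl.Root) (.node g c)
          (Sum.inr b :: (List.ofFn ws).flatten) := ⟨Sum.inr b, ws, rfl, hroot, hdec, hchild⟩
      obtain ⟨v, hv⟩ := hright.exists_eq_map_inr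
      refine ⟨.leaf, [.node g c], rfl, rfl, ?_⟩
      rw [STerm.graftMask, List.headD_cons, ← hright.length_eq, hv]
      simp [Function.comp_def]

theorem termCompat_graftList_iff {P : A → Prop} {s : STerm S ar} {u : List (STerm S ar)}
    (hu : u.length = s.arity) {w : List (A ⊕ B)} (hw : w.map Sum.isLeft = s.graftMask u) :
    (Al.dsum Bl).TermCompat (Sum.elim P Bl.Root) (s.graftList u) w ↔
      Al.TermCompat P s (leftSubword w) ∧ Bl.ForestCompat u (rightSubword w) := by
  induction s, u, hu using STerm.graft_induction generalizing P w with
  | leaf t =>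
    obtain ⟨v, rfl⟩ := exists_eq_map_inr_of_map_isLeft hw
    rw [leftSubword_map_inr, rightSubword_map_inr]
    simp [STerm.graftList, termCompat_map_inr_iff, TermCompat, ForestCompat]
  | node g c us _ hus ih =>
    rw [STerm.graftMask_node hus] at hw
    obtain ⟨x, w, rfl, hx, htail⟩ := List.map_eq_cons_iff.1 hw
    obtain ⟨a, rfl⟩ := Sum.isLeft_iff.1 hx
    obtain ⟨ws, rfl, hws⟩ := exists_flatten_ofFn_of_map_eq htail
    have hlen (i) : (ws i).length = ((c i).graftList (us i)).degree := by
      rw [← STerm.length_graftMask (hus i), ← hws, List.length_map]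
    have hleft (i) : (leftSubword (ws i)).length = (c i).degree := by
      rw [length_leftSubword, hws, STerm.count_true_graftMask (hus i)]
    have hright (i) : (rightSubword (ws i)).length = forestDeg (us i) := by
      rw [length_rightSubword, hws, STerm.count_false_graftMask (hus i)]
    have hleft_cons : leftSubword (Sum.inl a :: (List.ofFn ws).flatten) =
        a :: (List.ofFn fun i => leftSubword (ws i)).flatten :=
      congrArg (a :: ·) (filterMap_flatten_ofFn _ ws)
    have hright_cons : rightSubword (Sum.inl a :: (List.ofFn ws).flatten) =
        (List.ofFn fun i => rightSubword (ws i)).flatten :=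
      filterMap_flatten_ofFn _ ws
    rw [STerm.graftList_node hus, termCompat_node_iff hlen, hleft_cons, termCompat_node_iff hleft,
      hright_cons, forestCompat_flatten_ofFn hright, dsum_dec, Sum.elim_inl, Sum.elim_inl]
    simp only [dsum_edge_inl]
    rw [forall_congr' fun i => ih i (hws i), forall_and, and_assoc, and_assoc]

end ForestAlphabet

section Factorization

variable {S : Type} {ar : S → ℕ}

/-- The pair `(s, ū)` is a factorization `t = s⟨ū⟩` of the term `t`. -/
abbrev IsFactorization (p : STerm S ar × List (STerm S ar)) (t : STerm S ar) : Prop :=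
  p.2.length = p.1.arity ∧ p.1.graftList p.2 = t

/-- The concatenation of the words `STerm.graftMask` of a tuple of factorizations. -/
def forestGraftMask (c : List (STerm S ar × List (STerm S ar))) : List Bool :=
  c.flatMap fun p => p.1.graftMask p.2

theorem forestGraftMask_cons (p : STerm S ar × List (STerm S ar))
    (c : List (STerm S ar × List (STerm S ar))) :
    forestGraftMask (p :: c) = p.1.graftMask p.2 ++ forestGraftMask c :=
  List.flatMap_cons

variable {c : List (STerm S ar × List (STerm S ar))} {f : List (STerm S ar)}

theorem count_true_forestGraftMask (hc : List.Forall₂ IsFactorization c f) :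
    (forestGraftMask c).count true = forestDeg (c.map Prod.fst) := by
  induction hc with
  | nil => rfl
  | cons hp _ ih =>
    rw [forestGraftMask_cons, List.count_append, STerm.count_true_graftMask hp.1, ih, List.map_cons,
      forestDeg_cons]

theorem count_false_forestGraftMask (hc : List.Forall₂ IsFactorization c f) :
    (forestGraftMask c).count false = forestDeg (c.flatMap Prod.snd) := by
  induction hc with
  | nil => rfl
  | cons hp _ ih =>
    rw [forestGraftMask_cons, List.count_append, STerm.count_false_graftMask hp.1, ih,
      List.flatMap_cons, forestDeg_append]

theorem eq_of_forestGraftMask_eq {c' : List (STerm S ar × List (STerm S ar))}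
    (hc : List.Forall₂ IsFactorization c f) (hc' : List.Forall₂ IsFactorization c' f)
    (hmask : forestGraftMask c = forestGraftMask c') : c = c' := by
  induction hc generalizing c' with
  | nil => exact (List.forall₂_nil_right_iff.1 hc').symm
  | cons hp _ ih =>
    obtain ⟨p', c', hp', htuple, rfl⟩ := List.forall₂_cons_right_iff.1 hc'
    rw [forestGraftMask_cons, forestGraftMask_cons] at hmask
    obtain ⟨hhead, htail⟩ := List.append_inj hmask
      (by rw [STerm.length_graftMask hp.1, STerm.length_graftMask hp'.1, hp.2, hp'.2])
    obtain ⟨hs, hu⟩ := STerm.eq_of_graftMask_eq hp.1 hp'.1 (hp.2.trans hp'.2.symm) hhead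
    rw [Prod.ext hs hu, ih htuple htail]

namespace ForestAlphabet

variable {A B : Type} {Al : ForestAlphabet S A} {Bl : ForestAlphabet S B} {w : List (A ⊕ B)}

theorem ForestCompat.exists_forestGraftMask_eq (h : (Al.dsum Bl).ForestCompat f w) :
    ∃ c, List.Forall₂ IsFactorization c f ∧ w.map Sum.isLeft = forestGraftMask c := by
  induction f generalizing w with
  | nil =>
    obtain rfl : w = [] := h
    exact ⟨[], .nil, rfl⟩
  | cons t f ih =>
    obtain ⟨w₁, w₂, rfl, h₁, h₂⟩ := h
    obtain ⟨s, u, hu, hgraft, hmask₁⟩ := h₁.exists_graftMask_eq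
    obtain ⟨c, hc, hmask₂⟩ := ih h₂
    refine ⟨(s, u) :: c, .cons ⟨hu, hgraft⟩ hc, ?_⟩
    rw [List.map_append, hmask₁, hmask₂, forestGraftMask_cons]

theorem forestCompat_dsum_iff (hc : List.Forall₂ IsFactorization c f)
    (hw : w.map Sum.isLeft = forestGraftMask c) :
    (Al.dsum Bl).ForestCompat f w ↔
      Al.ForestCompat (c.map Prod.fst) (leftSubword w) ∧
        Bl.ForestCompat (c.flatMap Prod.snd) (rightSubword w) := by
  induction hc generalizing w with
  | nil =>
    obtain rfl : w = [] := List.map_eq_nil_iff.1 hw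
    simp [ForestCompat]
  | @cons p t c f hp _ ih =>
    obtain ⟨hu, rfl⟩ := hp
    rw [forestGraftMask_cons] at hw
    obtain ⟨w₁, w₂, rfl, hw₁, hw₂⟩ := List.map_eq_append_iff.1 hw
    have hlen : w₁.length = (p.1.graftList p.2).degree := by
      rw [← STerm.length_graftMask hu, ← hw₁, List.length_map]
    have hleft : (leftSubword w₁).length = p.1.degree := by
      rw [length_leftSubword, hw₁, STerm.count_true_graftMask hu]
    have hright : (rightSubword w₁).length = forestDeg p.2 := by
      rw [length_rightSubword, hw₁, STerm.count_false_graftMask hu]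
    rw [List.map_cons, List.flatMap_cons, leftSubword, rightSubword, List.filterMap_append,
      List.filterMap_append, forestCompat_cons_append hlen, forestCompat_cons_append hleft,
      forestCompat_append hright, dsum_root, termCompat_graftList_iff hu hw₁, ih hw₂,
      and_and_and_comm]

end ForestAlphabet

end Factorization

/-- the alphabet doubling property. For a reduced forest `f`, a word `w'` on `A`
and a word `w''` on `B`, the number of words `w` on `A ⊕ B` whose `A`-subword is `w'`, whose
`B`-subword is `w''`, and which are `f`-compatible for the disjoint sum alphabet, equals the
number of factorizations `((s₁,ū₁),…,(s_k,ū_k))` of the entries of `f` such that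
`w' ⊩^A rd(s₁…s_k)` and `w'' ⊩^B rd(u₁…u_k)`. -/
theorem alphabet_doubling {S : Type} {ar : S → ℕ} {A B : Type}
    (Al : ForestAlphabet S A) (Bl : ForestAlphabet S B)
    (f : List (STerm S ar)) (hf : IsReducedF f) (w' : List A) (w'' : List B) :
    Nat.card {w : List (A ⊕ B) //
        w.filterMap Sum.getLeft? = w' ∧ w.filterMap Sum.getRight? = w'' ∧
        (Al.dsum Bl).Compat w f} =
    Nat.card {c : List (STerm S ar × List (STerm S ar)) //
        List.Forall₂ (fun p t => p.2.length = p.1.arity ∧ p.1.graftList p.2 = t) c f ∧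
        Al.Compat w' ((rdF (c.map Prod.fst)).map Subtype.val) ∧
        Bl.Compat w'' ((rdF (c.flatMap Prod.snd)).map Subtype.val)} := by
  simp only [ForestAlphabet.compat_iff_forestCompat hf, ForestAlphabet.compat_rdF_iff]
  have hfactor (w : {w : List (A ⊕ B) // leftSubword w = w' ∧ rightSubword w = w'' ∧
      (Al.dsum Bl).ForestCompat f w}) :
      ∃ c : {c : List (STerm S ar × List (STerm S ar)) // List.Forall₂ IsFactorization c f ∧
        Al.ForestCompat (c.map Prod.fst) w' ∧ Bl.ForestCompat (c.flatMap Prod.snd) w''},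
      w.1.map Sum.isLeft = forestGraftMask c.1 := by
    obtain ⟨w, rfl, rfl, h⟩ := w
    obtain ⟨c, hc, hmask⟩ := h.exists_forestGraftMask_eq
    exact ⟨⟨c, hc, (ForestAlphabet.forestCompat_dsum_iff hc hmask).1 h⟩, hmask⟩
  choose F hF using hfactor
  refine Nat.card_eq_of_bijective F ⟨fun w v hwv => Subtype.ext ?_, ?_⟩
  · exact eq_of_map_isLeft_eq (by rw [hF, hF, hwv]) (w.2.1.trans v.2.1.symm)
      (w.2.2.1.trans v.2.2.1.symm)
  · rintro ⟨c, hc, hleft, hright⟩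
    obtain ⟨w, hmask, rfl, rfl⟩ := exists_map_isLeft_eq
      (hleft.length_eq.trans (count_true_forestGraftMask hc).symm)
      (hright.length_eq.trans (count_false_forestGraftMask hc).symm)
    have hw := (ForestAlphabet.forestCompat_dsum_iff hc hmask).2 ⟨hleft, hright⟩
    exact ⟨⟨w, rfl, rfl, hw⟩,
      Subtype.ext (eq_of_forestGraftMask_eq (F _).2.1 hc ((hF _).symm.trans hmask))⟩
end

section
/- Let S be a signature and 𝕂 a field of characteristic zero. For each reduced S-forest f, let φ_f : (𝔸_S)* → 𝕂 be the indicator function of the set {w ∈ (𝔸_S)* : w ⊩^{𝔸_S} f}. Then the family (φ_f), indexed by all reduced S-forests f, is linearly independent in the 𝕂-vector space of functions (𝔸_S)* → 𝕂; equivalently, the realization map r_{𝔸_S} sending E_f to φ_f is injective. -/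
open scoped BigOperators

/-!
The words compatible with different reduced forests form disjoint nonempty sets, so their
indicator functions are linearly independent. For nonemptiness, give every node the path leading
to it from its root, that is, take `ℓ = 0` everywhere. For disjointness, a forest can be read off
from any of its compatible words: in the subtree of the `i`-th child of a node with address `u`,
all letters have addresses starting with `u · i`, so the entry at position `|u|` cuts the word into
the subtrees of this node; and since edge labels are at least `1`, a letter is a root letter exactly
when it begins a tree.
-/

section Lists

variable {α β : Type*}

theorem getElem?_append_add_length {l₁ l₂ : List α} {i : ℕ} :
    (l₁ ++ l₂)[i + l₁.length]? = l₂[i]? := by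
  rw [List.getElem?_append_right (Nat.le_add_left _ _), Nat.add_sub_cancel]

theorem forall₂_append_left_iff {R : α → β → Prop} {l₁ l₂ : List α} {w : List β} :
    List.Forall₂ R (l₁ ++ l₂) w ↔
      ∃ w₁ w₂, w = w₁ ++ w₂ ∧ List.Forall₂ R l₁ w₁ ∧ List.Forall₂ R l₂ w₂ := by
  induction l₁ generalizing w with
  | nil => simp
  | cons a l₁ ih =>
    simp only [List.cons_append, List.forall₂_cons_left_iff, ih]
    constructor
    · rintro ⟨b, _, hab, ⟨w₁, w₂, rfl, h₁, h₂⟩, rfl⟩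
      exact ⟨b :: w₁, w₂, rfl, ⟨b, w₁, hab, h₁, rfl⟩, h₂⟩
    · rintro ⟨_, w₂, rfl, ⟨b, w₁, hab, h₁, rfl⟩, h₂⟩
      exact ⟨b, w₁ ++ w₂, hab, ⟨w₁, w₂, rfl, h₁, h₂⟩, rfl⟩

theorem forall₂_flatten_ofFn_left_iff {R : α → β → Prop} {n : ℕ} {l : Fin n → List α}
    {w : List β} :
    List.Forall₂ R (List.ofFn l).flatten w ↔
      ∃ ws : Fin n → List β, w = (List.ofFn ws).flatten ∧ ∀ i, List.Forall₂ R (l i) (ws i) := by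
  induction n generalizing w with
  | zero => simp
  | succ n ih =>
    simp only [List.ofFn_succ, List.flatten_cons, forall₂_append_left_iff, ih,
      Fin.exists_fin_succ_pi, Fin.forall_fin_succ, Fin.cons_zero, Fin.cons_succ]
    constructor
    · rintro ⟨w₁, _, rfl, h₁, ws, rfl, hws⟩
      exact ⟨w₁, ws, rfl, h₁, hws⟩
    · rintro ⟨w₁, ws, rfl, h₁, hws⟩
      exact ⟨w₁, _, rfl, h₁, ws, rfl, hws⟩

theorem exists_flatten_ofFn_eq_append {n : ℕ} (ws : Fin n → List α) (i : Fin n) :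
    ∃ pre post, (List.ofFn ws).flatten = pre ++ (ws i ++ post) ∧
      pre.length = ∑ j : Fin n, if (j : ℕ) < (i : ℕ) then (ws j).length else 0 := by
  induction n with
  | zero => exact i.elim0
  | succ n ih =>
    rw [List.ofFn_succ, List.flatten_cons, Fin.sum_univ_succ]
    cases i using Fin.cases with
    | zero => exact ⟨[], _, rfl, by simp⟩
    | succ i =>
      obtain ⟨pre, post, hflatten, hlen⟩ := ih (fun j => ws j.succ) i
      exact ⟨ws 0 ++ pre, post, by rw [hflatten, List.append_assoc], by simp [hlen]⟩

theorem append_inj_of_forall_mem {p : α → Prop} {l l' r r' : List α} (hl : ∀ a ∈ l, p a)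
    (hl' : ∀ a ∈ l', p a) (hr : ∀ a ∈ r.head?, ¬ p a) (hr' : ∀ a ∈ r'.head?, ¬ p a)
    (h : l ++ r = l' ++ r') : l = l' ∧ r = r' := by
  classical
  have takeWhile_eq {m s : List α} (hm : ∀ a ∈ m, p a) (hs : ∀ a ∈ s.head?, ¬ p a) :
      (m ++ s).takeWhile (fun a => p a) = m := by
    rw [List.takeWhile_append_of_pos (by simpa using hm)]
    cases s <;> simp_all
  have hll' : l = l' := by rw [← takeWhile_eq hl hr, h, takeWhile_eq hl' hr']
  subst hll'
  exact ⟨rfl, List.append_cancel_left h⟩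

theorem eq_of_flatten_ofFn_eq {n : ℕ} {key : α → β} {e : Fin n → β} (he : Function.Injective e)
    {v w : Fin n → List α} (hv : ∀ i, ∀ a ∈ v i, key a = e i) (hw : ∀ i, ∀ a ∈ w i, key a = e i)
    (h : (List.ofFn v).flatten = (List.ofFn w).flatten) : v = w := by
  induction n with
  | zero => exact Subsingleton.elim v w
  | succ n ih =>
    have key_head_ne {u : Fin (n + 1) → List α} (hu : ∀ i, ∀ a ∈ u i, key a = e i) :
        ∀ a ∈ (List.ofFn fun i : Fin n => u i.succ).flatten.head?, key a ≠ e 0 := by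
      intro a ha hkey
      obtain ⟨l, hl, hal⟩ := List.mem_flatten.1 (List.mem_of_mem_head? ha)
      obtain ⟨i, rfl⟩ := List.mem_ofFn.1 hl
      exact i.succ_ne_zero (he ((hu i.succ a hal).symm.trans hkey))
    rw [List.ofFn_succ, List.ofFn_succ, List.flatten_cons, List.flatten_cons] at h
    obtain ⟨hzero, hrest⟩ :=
      append_inj_of_forall_mem (hv 0) (hw 0) (key_head_ne hv) (key_head_ne hw) h
    have hsucc := ih (he.comp (Fin.succ_injective n)) (fun i => hv i.succ) (fun i => hw i.succ)
      hrest
    exact funext (Fin.cases hzero (congrFun hsucc))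

end Lists

theorem linearIndependent_indicator_one {ι X : Type*} (R : Type*) [Semiring R] {s : ι → Set X}
    (hne : ∀ i, (s i).Nonempty) (hdisj : Pairwise (Function.onFun Disjoint s)) :
    LinearIndependent R fun i => (s i).indicator fun _ => (1 : R) := by
  classical
  choose x hx using hne
  have mem_iff (i j : ι) : x i ∈ s j ↔ i = j :=
    ⟨fun hxi => by_contra fun hij => Set.disjoint_left.1 (hdisj hij) (hx i) hxi, fun h => h ▸ hx i⟩
  refine LinearIndependent.of_comp (LinearMap.funLeft R R x) ?_
  convert! Pi.linearIndependent_single_one ι R using 1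
  ext j i
  simp [Set.indicator_apply, Pi.single_apply, mem_iff]


section Compatibility

variable {S : Type} {ar : S → ℕ}

theorem STerm.length_decs_s11 (t : STerm S ar) : t.decs.length = t.degree := by
  induction t with
  | leaf => rfl
  | node g c ih =>
    simp [STerm.decs, STerm.degree, List.length_flatten, List.map_ofFn, List.sum_ofFn, ih, add_comm]

theorem STerm.lt_degree_of_mem_edges_s11 {t : STerm S ar} {e : ℕ × ℕ × ℕ} (he : e ∈ t.edges) :
    e.1 < t.degree ∧ e.2.2 < t.degree := by
  induction t generalizing e with
  | leaf => simp [STerm.edges] at he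
  | node g c ih =>
    obtain ⟨l, hl, he⟩ := List.mem_flatten.1 he
    obtain ⟨i, rfl⟩ := List.mem_ofFn.1 hl
    have offset_add_le : (c i).degree +
        (∑ j : Fin (ar g), if (j : ℕ) < (i : ℕ) then (c j).degree else 0) ≤
          ∑ j, (c j).degree := by
      rw [← Finset.sum_filter, ← Finset.sum_insert (f := fun j => (c j).degree) (by simp)]
      exact Finset.sum_le_sum_of_subset (Finset.subset_univ _)
    rw [STerm.degree]
    rcases List.mem_append.1 he with he | he
    · cases hc : c i with
      | leaf => simp [hc] at he
      | node g' c' =>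
        simp only [hc, List.mem_singleton] at he
        subst he
        rw [hc, STerm.degree] at offset_add_le
        constructor <;> dsimp only <;> omega
    · obtain ⟨e', he', rfl⟩ := List.mem_map.1 he
      have := ih i he'
      constructor <;> dsimp only <;> omega

namespace ForestAlphabet

variable {A : Type} (Al : ForestAlphabet S A)

/-- The edge part of compatibility: letters of `w` at positions joined by a `j`-th edge of the edge
list `E` are related by `→_j`. Positions beyond the end of `w` are unconstrained. -/
def EdgeCompat (E : List (ℕ × ℕ × ℕ)) (w : List A) : Prop :=
  ∀ p j q, (p, j, q) ∈ E → ∀ a ∈ w[p]?, ∀ b ∈ w[q]?, Al.Edge j a b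

/-- `Al.TermCompat P w t` is compatibility of `w` with the single tree `t`, defined along `t`, where
the root relation of `Al` is replaced by the predicate `P`: the subtree hanging below the letter `a`
through a `j`-th edge is read with `P` being `a →_j ·`. -/
inductive TermCompat_s11 : (A → Prop) → List A → STerm S ar → Prop
  | leaf {P : A → Prop} : TermCompat_s11 P [] STerm.leaf
  | node {P : A → Prop} {g : S} {c : Fin (ar g) → STerm S ar} {a : A} {ws : Fin (ar g) → List A}
      (hroot : P a) (hdec : Al.Dec g a)
      (hchild : ∀ i : Fin (ar g), TermCompat_s11 (Al.Edge (i + 1) a) (ws i) (c i)) :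
      TermCompat_s11 P (a :: (List.ofFn ws).flatten) (STerm.node g c)

variable {Al}

theorem TermCompat_s11.exists_cons {P : A → Prop} {w : List A} {t : STerm S ar}
    (h : Al.TermCompat_s11 P w t) (ht : t ≠ STerm.leaf) : ∃ a v, w = a :: v := by
  cases h with
  | leaf => exact absurd rfl ht
  | node => exact ⟨_, _, rfl⟩

theorem edgeCompat_append_edges {E E' : List (ℕ × ℕ × ℕ)} {w : List A} :
    Al.EdgeCompat (E ++ E') w ↔ Al.EdgeCompat E w ∧ Al.EdgeCompat E' w := by
  simp only [EdgeCompat, List.mem_append, or_imp, forall_and]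

theorem edgeCompat_flatten_ofFn {n : ℕ} {E : Fin n → List (ℕ × ℕ × ℕ)} {w : List A} :
    Al.EdgeCompat (List.ofFn E).flatten w ↔ ∀ i, Al.EdgeCompat (E i) w := by
  simp only [EdgeCompat, List.mem_flatten, List.mem_ofFn]
  grind

theorem edgeCompat_append_right {E : List (ℕ × ℕ × ℕ)} {w post : List A}
    (hE : ∀ e ∈ E, e.1 < w.length ∧ e.2.2 < w.length) :
    Al.EdgeCompat E (w ++ post) ↔ Al.EdgeCompat E w := by
  refine forall₄_congr fun p j q h => ?_
  obtain ⟨hp, hq⟩ := hE _ h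
  rw [List.getElem?_append_left hp, List.getElem?_append_left hq]

theorem edgeCompat_map_add {E : List (ℕ × ℕ × ℕ)} {pre w : List A} :
    Al.EdgeCompat (E.map fun e => (e.1 + pre.length, e.2.1, e.2.2 + pre.length)) (pre ++ w) ↔
      Al.EdgeCompat E w := by
  constructor
  · intro h p j q hE
    have := h _ _ _ (List.mem_map_of_mem hE)
    simpa only [getElem?_append_add_length] using this
  · intro h p j q hE
    obtain ⟨e, he, heq⟩ := List.mem_map.1 hE
    cases heq
    simpa only [getElem?_append_add_length] using h _ _ _ he

theorem edgeCompat_node {g : S} {c : Fin (ar g) → STerm S ar} {a : A} {ws : Fin (ar g) → List A}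
    (hlen : ∀ i, (ws i).length = (c i).degree) :
    Al.EdgeCompat (STerm.node g c).edges (a :: (List.ofFn ws).flatten) ↔
      ∀ i : Fin (ar g), (∀ b ∈ (ws i).head?, Al.Edge (i + 1) a b) ∧
        Al.EdgeCompat (c i).edges (ws i) := by
  rw [STerm.edges, edgeCompat_flatten_ofFn]
  refine forall_congr' fun i => ?_
  obtain ⟨pre, post, hflatten, hpre⟩ := exists_flatten_ofFn_eq_append ws i
  have hoffset : 1 + ∑ j : Fin (ar g), (if (j : ℕ) < (i : ℕ) then (c j).degree else 0) =
      (a :: pre).length := by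
    simp only [List.length_cons, hpre, hlen, add_comm 1]
  have hsub : Al.EdgeCompat (c i).edges (ws i ++ post) ↔ Al.EdgeCompat (c i).edges (ws i) :=
    edgeCompat_append_right fun e he => by simpa only [hlen] using STerm.lt_degree_of_mem_edges_s11 he
  rw [edgeCompat_append_edges, hoffset, hflatten, ← List.cons_append, edgeCompat_map_add, hsub]
  refine and_congr_left' ?_
  have hi := hlen i
  cases hc : c i with
  | leaf =>
    rw [hc, STerm.degree, List.length_eq_zero_iff] at hi
    simp [hi, EdgeCompat]
  | node g' c' =>
    rw [hc] at hi
    obtain ⟨b, w, hw⟩ := List.exists_cons_of_length_pos (l := ws i) (by simp [hi, STerm.degree])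
    have hsingle {p j q : ℕ} {v : List A} :
        Al.EdgeCompat [(p, j, q)] v ↔ ∀ a ∈ v[p]?, ∀ b ∈ v[q]?, Al.Edge j a b := by
      simp only [EdgeCompat, List.mem_singleton, Prod.mk.injEq]
      exact ⟨fun h => h p j q ⟨rfl, rfl, rfl⟩, by rintro h _ _ _ ⟨rfl, rfl, rfl⟩; exact h⟩
    simp [hsingle, hw]

theorem termCompat_iff {P : A → Prop} {w : List A} {t : STerm S ar} :
    Al.TermCompat_s11 P w t ↔
      List.Forall₂ Al.Dec t.decs w ∧ (∀ a ∈ w.head?, P a) ∧ Al.EdgeCompat t.edges w := by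
  induction t generalizing P w with
  | leaf =>
    constructor
    · rintro ⟨⟩
      simp [STerm.decs, STerm.edges, EdgeCompat]
    · rintro ⟨hdec, -, -⟩
      cases hdec
      exact .leaf
  | node g c ih =>
    have length_eq {ws : Fin (ar g) → List A}
        (h : ∀ i, List.Forall₂ Al.Dec (c i).decs (ws i)) (i) : (ws i).length = (c i).degree := by
      rw [← (h i).length_eq, STerm.length_decs_s11]
    rw [STerm.decs, List.forall₂_cons_left_iff]
    simp only [forall₂_flatten_ofFn_left_iff]
    constructor
    · rintro (_ | ⟨hroot, hdec, hchild⟩)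
      simp only [ih] at hchild
      have hdecs i := (hchild i).1
      exact ⟨⟨_, _, hdec, ⟨_, rfl, hdecs⟩, rfl⟩, by simpa using hroot,
        (edgeCompat_node (length_eq hdecs)).2 fun i => (hchild i).2⟩
    · rintro ⟨⟨a, _, hdec, ⟨ws, rfl, hdecs⟩, rfl⟩, hroot, hedges⟩
      rw [edgeCompat_node (length_eq hdecs)] at hedges
      exact .node (hroot a rfl) hdec fun i => (ih i).2 ⟨hdecs i, hedges i⟩

theorem compat_iff {w : List A} {f : List (STerm S ar)} :
    Al.Compat w f ↔ List.Forall₂ Al.Dec (forestDecs f) w ∧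
      (∀ i ∈ rootIdxs f, ∀ a ∈ w[i]?, Al.Root a) ∧ Al.EdgeCompat (forestEdges f) w := by
  have hlen : (forestDecs f).length = forestDeg f := by
    simp [forestDecs, forestDeg, List.length_flatten, Function.comp_def, STerm.length_decs_s11]
  simp only [Compat, EdgeCompat, List.forall₂_iff_get, hlen, Option.mem_def,
    List.getElem?_eq_some_iff, List.get_eq_getElem, and_assoc]
  grind

theorem compat_nil {w : List A} : Al.Compat w ([] : List (STerm S ar)) ↔ w = [] := by
  simp [compat_iff, forestDecs, rootIdxs, forestEdges, EdgeCompat]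

theorem Compat.root_of_mem_head? {w : List A} {f : List (STerm S ar)} (h : Al.Compat w f) :
    ∀ a ∈ w.head?, Al.Root a := by
  cases f with
  | nil => simp [compat_nil.1 h]
  | cons t f =>
    rw [List.head?_eq_getElem?]
    exact (compat_iff.1 h).2.1 0 List.mem_cons_self

theorem edgeCompat_forestEdges_cons {t : STerm S ar} {f : List (STerm S ar)} {w₁ w₂ : List A}
    (hlen : w₁.length = t.degree) :
    Al.EdgeCompat (forestEdges (t :: f)) (w₁ ++ w₂) ↔
      Al.EdgeCompat t.edges w₁ ∧ Al.EdgeCompat (forestEdges f) w₂ := by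
  rw [forestEdges, edgeCompat_append_edges, ← hlen, edgeCompat_map_add,
    edgeCompat_append_right fun e he => hlen ▸ STerm.lt_degree_of_mem_edges_s11 he]

theorem compat_cons {w : List A} {t : STerm S ar} {f : List (STerm S ar)} :
    Al.Compat w (t :: f) ↔
      ∃ w₁ w₂, w = w₁ ++ w₂ ∧ Al.TermCompat_s11 Al.Root w₁ t ∧ Al.Compat w₂ f := by
  have forestDecs_cons : forestDecs (t :: f) = t.decs ++ forestDecs f := rfl
  have length_eq {w₁ : List A} (h : List.Forall₂ Al.Dec t.decs w₁) : w₁.length = t.degree := by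
    rw [← h.length_eq, STerm.length_decs_s11]
  constructor
  · intro h
    obtain ⟨hdec, hroot, hedge⟩ := compat_iff.1 h
    rw [forestDecs_cons, forall₂_append_left_iff] at hdec
    obtain ⟨w₁, w₂, rfl, hdec₁, hdec₂⟩ := hdec
    obtain ⟨hedge₁, hedge₂⟩ := (edgeCompat_forestEdges_cons (length_eq hdec₁)).1 hedge
    refine ⟨w₁, w₂, rfl, termCompat_iff.2 ⟨hdec₁, fun a ha => ?_, hedge₁⟩,
      compat_iff.2 ⟨hdec₂, fun i hi a ha => ?_, hedge₂⟩⟩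
    · exact h.root_of_mem_head? a (List.mem_head?_append_of_mem_head? ha)
    · exact hroot _ (List.mem_cons_of_mem _ (List.mem_map_of_mem hi)) a
        (by rwa [← length_eq hdec₁, getElem?_append_add_length])
  · rintro ⟨w₁, w₂, rfl, h₁, h₂⟩
    obtain ⟨hdec₁, hroot₁, hedge₁⟩ := termCompat_iff.1 h₁
    obtain ⟨hdec₂, hroot₂, hedge₂⟩ := compat_iff.1 h₂
    refine compat_iff.2 ⟨forall₂_append_left_iff.2 ⟨w₁, w₂, rfl, hdec₁, hdec₂⟩, ?_,
      (edgeCompat_forestEdges_cons (length_eq hdec₁)).2 ⟨hedge₁, hedge₂⟩⟩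
    simp only [rootIdxs, List.forall_mem_cons, List.forall_mem_map, ← length_eq hdec₁,
      getElem?_append_add_length]
    refine ⟨fun a ha => ?_, hroot₂⟩
    cases w₁ with
    | nil => exact h₂.root_of_mem_head? a (by rwa [List.head?_eq_getElem?])
    | cons b w₁ => exact hroot₁ a ha

theorem eq_nil_of_compat_nil {f : List (STerm S ar)} (hf : IsReducedF f)
    (h : Al.Compat [] f) : f = [] := by
  cases f with
  | nil => rfl
  | cons t f =>
    obtain ⟨w₁, w₂, hw, h₁, -⟩ := compat_cons.1 h
    obtain ⟨a, v, rfl⟩ := h₁.exists_cons (hf t List.mem_cons_self)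
    cases hw

end ForestAlphabet

end Compatibility

namespace ASAlphabet

open ForestAlphabet

variable {S : Type} {ar : S → ℕ} {P P' : S × List ℕ → Prop} {w : List (S × List ℕ)}
  {t t' : STerm S ar}

theorem prefix_of_termCompat {v : List ℕ} (h : (ASAlphabet S).TermCompat_s11 P w t)
    (hP : ∀ a, P a → v <+: a.2) : ∀ a ∈ w, v <+: a.2 := by
  induction h with
  | leaf => simp
  | node hroot _ _ ih =>
    simp only [List.forall_mem_cons, List.forall_mem_flatten, List.forall_mem_ofFn_iff]
    refine ⟨hP _ hroot, fun i => ih i ?_⟩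
    rintro b ⟨ℓ, hb⟩
    exact (hP _ hroot).trans ⟨_, hb.symm⟩

theorem getElem?_of_termCompat_edge {a : S × List ℕ} {j : ℕ}
    (h : (ASAlphabet S).TermCompat_s11 ((ASAlphabet S).Edge j a) w t) :
    ∀ b ∈ w, b.2[a.2.length]? = some j := by
  have hprefix : ∀ b ∈ w, a.2 ++ [j] <+: b.2 :=
    prefix_of_termCompat h fun b ⟨ℓ, hb⟩ => ⟨List.replicate ℓ 0, by simp [hb]⟩
  intro b hb
  obtain ⟨r, hr⟩ := hprefix b hb
  simp [← hr]

theorem not_root_of_mem_tail (h : (ASAlphabet S).TermCompat_s11 P w t) :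
    ∀ b ∈ w.tail, ¬ (ASAlphabet S).Root b := by
  cases h with
  | leaf => simp
  | @node _ _ _ a ws _ _ hchild =>
    simp only [List.tail_cons, List.forall_mem_flatten, List.forall_mem_ofFn_iff]
    rintro i b hb ⟨ℓ, hℓ⟩
    have hentry := getElem?_of_termCompat_edge (hchild i) b hb
    rw [hℓ] at hentry
    have := List.eq_of_mem_replicate (List.mem_of_getElem? hentry)
    omega

theorem eq_of_termCompat (h : (ASAlphabet S).TermCompat_s11 P w t)
    (h' : (ASAlphabet S).TermCompat_s11 P' w t') : t = t' := by
  induction h generalizing P' t' with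
  | leaf =>
    cases h' with
    | leaf => rfl
  | @node _ g c a ws _ hdec hchild ih =>
    generalize hw : a :: (List.ofFn ws).flatten = w at h'
    cases h' with
    | leaf => cases hw
    | @node _ g' c' a' ws' _ hdec' hchild' =>
      obtain ⟨rfl, hflatten⟩ := List.cons.inj hw
      obtain rfl : g = g' := hdec.symm.trans hdec'
      have some_succ_injective : Function.Injective fun i : Fin (ar g) => some ((i : ℕ) + 1) :=
        (Option.some_injective ℕ).comp ((add_left_injective 1).comp Fin.val_injective)
      have hws : ws = ws' :=
        eq_of_flatten_ofFn_eq (key := fun b => b.2[a.2.length]?) some_succ_injective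
          (fun i => getElem?_of_termCompat_edge (hchild i))
          (fun i => getElem?_of_termCompat_edge (hchild' i)) hflatten
      subst hws
      exact congrArg _ (funext fun i => ih i (hchild' i))

theorem append_inj_of_termCompat {w' v v' : List (S × List ℕ)}
    (ht : t ≠ STerm.leaf) (ht' : t' ≠ STerm.leaf) (hw : (ASAlphabet S).TermCompat_s11 P w t)
    (hw' : (ASAlphabet S).TermCompat_s11 P' w' t') (hv : ∀ a ∈ v.head?, (ASAlphabet S).Root a)
    (hv' : ∀ a ∈ v'.head?, (ASAlphabet S).Root a) (h : w ++ v = w' ++ v') : w = w' ∧ v = v' := by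
  have htail := not_root_of_mem_tail hw
  have htail' := not_root_of_mem_tail hw'
  obtain ⟨a, r, rfl⟩ := hw.exists_cons ht
  obtain ⟨a', r', rfl⟩ := hw'.exists_cons ht'
  obtain ⟨rfl, hrest⟩ := List.cons.inj h
  obtain ⟨rfl, rfl⟩ := append_inj_of_forall_mem htail htail'
    (fun a ha => not_not_intro (hv a ha)) (fun a ha => not_not_intro (hv' a ha)) hrest
  exact ⟨rfl, rfl⟩

theorem eq_of_compat {f f' : List (STerm S ar)} (hf : IsReducedF f) (hf' : IsReducedF f')
    (h : (ASAlphabet S).Compat w f) (h' : (ASAlphabet S).Compat w f') : f = f' := by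
  induction f generalizing w f' with
  | nil => exact (eq_nil_of_compat_nil hf' (compat_nil.1 h ▸ h')).symm
  | cons t f ih =>
    cases f' with
    | nil => exact eq_nil_of_compat_nil hf (compat_nil.1 h' ▸ h)
    | cons t' f' =>
      obtain ⟨ht, hf⟩ := List.forall_mem_cons.1 hf
      obtain ⟨ht', hf'⟩ := List.forall_mem_cons.1 hf'
      obtain ⟨w₁, w₂, rfl, h₁, h₂⟩ := compat_cons.1 h
      obtain ⟨w₁', w₂', hw, h₁', h₂'⟩ := compat_cons.1 h'
      obtain ⟨rfl, rfl⟩ := append_inj_of_termCompat ht ht' h₁ h₁' h₂.root_of_mem_head?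
        h₂'.root_of_mem_head? hw
      rw [eq_of_termCompat h₁ h₁', ih hf hf' h₂ h₂']

theorem exists_termCompat (t : STerm S ar) {u : List ℕ} (hP : ∀ g, P (g, u)) :
    ∃ w, (ASAlphabet S).TermCompat_s11 P w t := by
  induction t generalizing P u with
  | leaf => exact ⟨[], .leaf⟩
  | node g c ih =>
    choose ws hws using fun i : Fin (ar g) =>
      ih i (P := (ASAlphabet S).Edge (i + 1) (g, u)) (u := u ++ [(i : ℕ) + 1]) fun _ => ⟨0, rfl⟩
    exact ⟨_, .node (hP g) rfl hws⟩

theorem exists_compat (f : List (STerm S ar)) : ∃ w, (ASAlphabet S).Compat w f := by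
  induction f with
  | nil => exact ⟨[], compat_nil.2 rfl⟩
  | cons t f ih =>
    obtain ⟨w₁, h₁⟩ := exists_termCompat t (P := (ASAlphabet S).Root) (u := []) fun _ => ⟨0, rfl⟩
    obtain ⟨w₂, h₂⟩ := ih
    exact ⟨w₁ ++ w₂, compat_cons.2 ⟨w₁, w₂, rfl, h₁, h₂⟩⟩

end ASAlphabet

theorem realization_AS_injective_general {S : Type} {ar : S → ℕ} (R : Type*) [Semiring R] :
    LinearIndependent R
      (fun f : {f : List (STerm S ar) // IsReducedF f} =>
        Set.indicator {w : List (S × List ℕ) | (ASAlphabet S).Compat w f.val}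
          (fun _ => (1 : R))) := by
  have hdisj : Pairwise (Function.onFun Disjoint
      fun f : {f : List (STerm S ar) // IsReducedF f} =>
        {w : List (S × List ℕ) | (ASAlphabet S).Compat w f.val}) := by
    intro f f' hne
    refine Set.disjoint_left.2 fun w hw hw' => hne (Subtype.ext ?_)
    exact ASAlphabet.eq_of_compat f.property f'.property hw hw'
  exact linearIndependent_indicator_one R (fun f => ASAlphabet.exists_compat f.val) hdisj

/-- the indicator functions of the compatibility sets
`{w ∈ (𝔸_S)* : w ⊩^{𝔸_S} f}`, indexed by the reduced `S`-forests `f`, are linearly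
independent; equivalently, the realization map `r_{𝔸_S}` is injective. -/
theorem realization_AS_injective {S : Type} {ar : S → ℕ}
    (𝕂 : Type) [Field 𝕂] [CharZero 𝕂] :
    LinearIndependent 𝕂
      (fun f : {f : List (STerm S ar) // IsReducedF f} =>
        Set.indicator {w : List (S × List ℕ) | (ASAlphabet S).Compat w f.val}
          (fun _ => (1 : 𝕂))) :=
  realization_AS_injective_general 𝕂
end

section
/- Let S be a positive signature and let ≡ be the smallest equivalence relation on S-terms that contains the pairs (ι(g) ∘_i ι(g'), ι(g') ∘_{i'} ι(g)) for all g, g' ∈ S, i ∈ {1,…,ar(g)}, i' ∈ {1,…,ar(g')}, and that is an operad congruence. Then two S-terms t and t' satisfy t ≡ t' if and only if the multiset of decorations of the internal nodes of t equals the multiset of decorations of the internal nodes of t'. In particular, the elements of arity n of the quotient operad MAs_S are in bijection with the multisets {g_1,…,g_ℓ} over S satisfying ar(g_1) + ⋯ + ar(g_ℓ) − ℓ + 1 = n, and under this bijection the operadic composition corresponds to multiset union. -/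
open scoped BigOperators

/-- The partial composition `t ∘_i s` (0-based `i`): grafting `s` at the `i`-th leaf only. -/
def graftAt {S : Type} {ar : S → ℕ} (t : STerm S ar) (i : ℕ) (s : STerm S ar) : STerm S ar :=
  t.graftList ((List.replicate t.arity STerm.leaf).set i s)

/-- The smallest equivalence relation on `S`-terms containing the pairs
`(ι(g) ∘_i ι(g'), ι(g') ∘_{i'} ι(g))` and which is an operad congruence. -/
inductive MasRel {S : Type} {ar : S → ℕ} : STerm S ar → STerm S ar → Prop
  | gen (g g' : S) (i : Fin (ar g)) (i' : Fin (ar g')) :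
      MasRel (graftAt (iotaT g) (i : ℕ) (iotaT g')) (graftAt (iotaT g') (i' : ℕ) (iotaT g))
  | refl (t : STerm S ar) : MasRel t t
  | symm {t t' : STerm S ar} : MasRel t t' → MasRel t' t
  | trans {t t' t'' : STerm S ar} : MasRel t t' → MasRel t' t'' → MasRel t t''
  | congr (t t' : STerm S ar) (l l' : List (STerm S ar)) :
      MasRel t t' → t.arity = t'.arity → l.length = t.arity → l'.length = t'.arity →
      List.Forall₂ MasRel l l' → MasRel (t.graftList l) (t'.graftList l')

/-! Equivalent terms have the same decorations because grafting adds up multisets of decorations.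
For the converse, the defining relations give `ι(g) ∘ᵢ ι(h) ≡ ι(h) ∘₁ ι(g)`. Grafting
`a₁, …, aᵢ₋₁, s` onto the first `i` leaves of both sides shows that, when the last non-leaf child of
`g` is a left comb with root `h`, this `h` can be made the parent of `g`. Processing the children
from right to left, each being a left comb by induction, thus strings all the nodes together into a
left comb, and the same relation with `i = 1` permutes the nodes of a comb. -/

theorem flatten_ofFn_take_drop {α : Type*} (l : List α) {n : ℕ} (a : Fin n → ℕ) :
    (List.ofFn fun i : Fin n =>
      (l.drop (∑ j : Fin n, if (j : ℕ) < (i : ℕ) then a j else 0)).take (a i)).flatten =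
      l.take (∑ j, a j) := by
  induction n with
  | zero => simp
  | succ n ih =>
    have hinit := ih fun j => a j.castSucc
    simp only [List.ofFn_succ', List.concat_eq_append, List.flatten_append, List.flatten_singleton,
      Fin.sum_univ_castSucc, Fin.val_castSucc, Fin.val_last, Fin.is_lt, if_true, lt_irrefl,
      if_false, add_zero, (Fin.is_lt _).not_gt, hinit, List.take_add]

theorem sum_fin_ite_lt_one {n m : ℕ} (hm : m ≤ n) :
    (∑ j : Fin n, if (j : ℕ) < m then 1 else 0) = m := by
  simp [Fin.card_filter_val_lt, hm]

theorem coe_flatten_ofFn {α : Type*} {n : ℕ} (f : Fin n → List α) :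
    ((List.ofFn f).flatten : Multiset α) = ∑ i, (f i : Multiset α) := by
  rw [← Multiset.coe_join, Multiset.join, Multiset.sum_coe, List.map_ofFn, List.sum_ofFn]
  rfl

namespace STerm

variable {S : Type} {ar : S → ℕ}

theorem coe_decs_node (g : S) (c : Fin (ar g) → STerm S ar) :
    ((node g c).decs : Multiset S) = g ::ₘ ∑ i, ((c i).decs : Multiset S) := by
  rw [decs, ← Multiset.cons_coe, coe_flatten_ofFn]

theorem coe_decs_graftList (t : STerm S ar) (l : List (STerm S ar)) (hl : l.length ≤ t.arity) :
    ((t.graftList l).decs : Multiset S) = t.decs + forestDecs l := by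
  induction t generalizing l with
  | leaf =>
    match l, hl with
    | [], _ => simp [graftList, decs, forestDecs]
    | [s], _ => simp [graftList, decs, forestDecs]
  | node g c ih =>
    have hblocks := flatten_ofFn_take_drop l fun i => (c i).arity
    rw [arity] at hl
    rw [List.take_of_length_le hl] at hblocks
    have hforest := congrArg (fun f => (forestDecs f : Multiset S)) hblocks
    simp only [forestDecs, List.map_flatten, List.flatten_flatten, List.map_ofFn,
      coe_flatten_ofFn, Function.comp_apply] at hforest
    rw [graftList, coe_decs_node, coe_decs_node, Multiset.cons_add, forestDecs, ← hforest,
      ← Finset.sum_add_distrib]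
    exact congrArg _ (Finset.sum_congr rfl fun i _ => ih i _ (List.length_take_le _ _))

theorem coe_decs_graftAt (t s : STerm S ar) {i : ℕ} (hi : i < t.arity) :
    ((graftAt t i s).decs : Multiset S) = t.decs + s.decs := by
  rw [graftAt, coe_decs_graftList _ _ (by simp), List.set_eq_take_append_cons_drop]
  simp [hi, forestDecs, decs]

theorem arity_iotaT (g : S) : (iotaT g : STerm S ar).arity = ar g := by
  simp [iotaT, arity]

theorem coe_decs_graftList_iotaT_singleton {g : S} (hg : 0 < ar g) (s : STerm S ar) :
    (((iotaT g).graftList [s]).decs : Multiset S) = g ::ₘ (s.decs : Multiset S) := by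
  rw [coe_decs_graftList _ _ (by simpa [arity_iotaT])]
  simp [iotaT, decs, forestDecs]

theorem sum_map_ar_decs_add_one (t : STerm S ar) :
    (t.decs.map ar).sum + 1 = t.decs.length + t.arity := by
  induction t with
  | leaf => rfl
  | node g c ih =>
    have hsum := Finset.sum_congr rfl fun i (_ : i ∈ Finset.univ) => ih i
    simp only [Finset.sum_add_distrib, Finset.sum_const, Finset.card_univ, Fintype.card_fin,
      smul_eq_mul, mul_one] at hsum
    simp only [decs, arity, List.map_cons, List.sum_cons, List.length_cons,
      List.map_flatten, List.sum_flatten, List.length_flatten, List.map_ofFn, List.sum_ofFn,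
      Function.comp_apply]
    lia

theorem arity_graftAt_add_one (t s : STerm S ar) {i : ℕ} (hi : i < t.arity) :
    (graftAt t i s).arity + 1 = t.arity + s.arity := by
  have hperm : (graftAt t i s).decs.Perm (t.decs ++ s.decs) :=
    Multiset.coe_eq_coe.mp (coe_decs_graftAt t s hi)
  have hgraft := sum_map_ar_decs_add_one (graftAt t i s)
  rw [(hperm.map ar).sum_eq, hperm.length_eq, List.map_append, List.sum_append,
    List.length_append] at hgraft
  have ht := sum_map_ar_decs_add_one t
  have hs := sum_map_ar_decs_add_one s
  lia

theorem graftList_nil (t : STerm S ar) : t.graftList [] = t := by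
  induction t with
  | leaf => rfl
  | node g c ih => simp [graftList, ih]

theorem graftList_append_replicate_leaf (t : STerm S ar) (l : List (STerm S ar)) (n : ℕ) :
    t.graftList (l ++ List.replicate n leaf) = t.graftList l := by
  induction t generalizing l n with
  | leaf => cases l <;> cases n <;> rfl
  | node g c ih =>
    simp only [graftList, List.drop_append, List.take_append, List.drop_replicate,
      List.take_replicate, ih]

theorem graftList_leaf_drop_take_one (l : List (STerm S ar)) (k : ℕ) :
    (leaf : STerm S ar).graftList ((l.drop k).take 1) = l.getD k leaf := by
  simp [graftList, List.headD_eq_head?_getD, List.getD_eq_getElem?_getD, List.head?_take,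
    List.head?_drop]

theorem graftList_iotaT (g : S) (l : List (STerm S ar)) :
    (iotaT g).graftList l = node g fun i => l.getD i leaf := by
  rw [iotaT, graftList]
  congr 1
  funext i
  simp only [arity]
  rw [graftList_leaf_drop_take_one, sum_fin_ite_lt_one i.2.le]

theorem graftList_iotaT_ofFn (g : S) (c : Fin (ar g) → STerm S ar) :
    (iotaT g).graftList (List.ofFn c) = node g c := by
  simp [graftList_iotaT, List.getD_eq_getElem?_getD]

theorem graftAt_iotaT (g : S) (i : ℕ) (s : STerm S ar) :
    graftAt (iotaT g) i s = node g fun j => if (j : ℕ) = i then s else leaf := by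
  rw [graftAt, graftList_iotaT, arity_iotaT]
  congr 1
  funext j
  by_cases hji : (j : ℕ) = i
  · simp [List.getD_eq_getElem?_getD, ← hji]
  · simp [List.getD_eq_getElem?_getD, hji, Ne.symm hji]

theorem graftList_graftAt_iotaT {g : S} {s : STerm S ar} {a b : List (STerm S ar)}
    (ha : a.length < ar g) (hb : b.length ≤ s.arity) :
    (graftAt (iotaT g) a.length s).graftList (a ++ b) =
      (iotaT g).graftList (a ++ [s.graftList b]) := by
  rw [graftAt_iotaT, graftList, graftList_iotaT]
  congr 1
  funext j
  set leavesBefore := ∑ k : Fin (ar g), if (k : ℕ) < (j : ℕ) then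
    (if (k : ℕ) = a.length then s else leaf).arity else 0 with hdef
  have leavesBefore_eq (hj : (j : ℕ) ≤ a.length) : leavesBefore = j := by
    rw [← sum_fin_ite_lt_one j.2.le, hdef]
    refine Finset.sum_congr rfl fun k _ => ?_
    split_ifs <;> first | rfl | lia
  have le_leavesBefore (hj : a.length < j) : a.length + s.arity ≤ leavesBefore := by
    calc a.length + s.arity
        = ∑ k : Fin (ar g), ((if (k : ℕ) < a.length then 1 else 0) +
            if k = ⟨a.length, ha⟩ then s.arity else 0) := by
          rw [Finset.sum_add_distrib, sum_fin_ite_lt_one ha.le]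
          simp
      _ ≤ leavesBefore := by
          refine Finset.sum_le_sum fun k _ => ?_
          simp only [Fin.ext_iff]
          split_ifs <;> first | lia | simp [arity]
  rcases lt_trichotomy (j : ℕ) a.length with hj | hj | hj
  · simp [leavesBefore_eq hj.le, hj.ne, arity, graftList_leaf_drop_take_one,
      List.getD_eq_getElem?_getD, List.getElem?_append_left hj]
  · simp [leavesBefore_eq hj.le, hj, List.take_of_length_le hb]
  · have hdrop : (a ++ b).drop leavesBefore = [] := by
      refine List.drop_eq_nil_of_le ?_
      have := le_leavesBefore hj
      rw [List.length_append]
      lia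
    simp [hdrop, hj.ne', graftList_nil, List.getD_eq_getElem?_getD, hj]

end STerm

namespace MasRel

open STerm

variable {S : Type} {ar : S → ℕ}

theorem coe_decs_eq {t t' : STerm S ar} (h : MasRel t t') :
    (t.decs : Multiset S) = t'.decs := by
  refine MasRel.rec (motive_1 := fun t t' _ => (t.decs : Multiset S) = t'.decs)
    (motive_2 := fun l l' _ => (forestDecs l : Multiset S) = forestDecs l')
    ?gen ?refl ?symm ?trans ?congr ?nil ?cons h
  case gen =>
    intro g g' i i'
    rw [coe_decs_graftAt _ _ ((arity_iotaT g).symm ▸ i.2),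
      coe_decs_graftAt _ _ ((arity_iotaT g').symm ▸ i'.2), add_comm]
  case refl => exact fun _ => rfl
  case symm => exact fun _ h => h.symm
  case trans => exact fun _ _ h h' => h.trans h'
  case congr =>
    intro t t' l l' _ _ hl hl' _ ht hforest
    rw [coe_decs_graftList _ _ hl.le, coe_decs_graftList _ _ hl'.le, ht, hforest]
  case nil => rfl
  case cons =>
    intro s s' l l' _ _ hs hforest
    simp only [forestDecs, List.map_cons, List.flatten_cons, ← Multiset.coe_add] at hforest ⊢
    rw [hs, hforest]

theorem arity_eq {t t' : STerm S ar} (h : MasRel t t') : t.arity = t'.arity := by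
  have hperm : t.decs.Perm t'.decs := Multiset.coe_eq_coe.mp h.coe_decs_eq
  have ht := sum_map_ar_decs_add_one t
  rw [(hperm.map ar).sum_eq, hperm.length_eq, sum_map_ar_decs_add_one t'] at ht
  exact (Nat.add_left_cancel ht).symm

theorem graftList {t t' : STerm S ar} {l l' : List (STerm S ar)} (h : MasRel t t')
    (hl : l.length ≤ t.arity) (hll' : List.Forall₂ MasRel l l') :
    MasRel (t.graftList l) (t'.graftList l') := by
  rw [← graftList_append_replicate_leaf t l (t.arity - l.length),
    ← graftList_append_replicate_leaf t' l' (t.arity - l.length)]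
  have hlen := hll'.length_eq
  have harity := h.arity_eq
  refine h.congr _ _ _ _ harity ?_ ?_
    (List.rel_append hll' (List.forall₂_same.mpr fun s _ => refl s))
  all_goals
    rw [List.length_append, List.length_replicate]
    lia

theorem graftList_iotaT_singleton {g : S} (hg : 0 < ar g) {s s' : STerm S ar}
    (h : MasRel s s') : MasRel ((iotaT g).graftList [s]) ((iotaT g).graftList [s']) :=
  (refl _).graftList (by simpa [arity_iotaT]) (.cons h .nil)

theorem graftList_iotaT_append_swap {g h : S} {a : List (STerm S ar)} (ha : a.length < ar g)
    (hh : 0 < ar h) (s : STerm S ar) :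
    MasRel ((iotaT g).graftList (a ++ [(iotaT h).graftList [s]]))
      ((iotaT h).graftList [(iotaT g).graftList (a ++ [s])]) := by
  have hgen : MasRel (graftAt (iotaT g) a.length (iotaT h) : STerm S ar)
      (graftAt (iotaT h) 0 (iotaT g)) := gen g h ⟨a.length, ha⟩ ⟨0, hh⟩
  have houter : (graftAt (iotaT g) a.length (iotaT h)).graftList (a ++ [s]) =
      (iotaT g).graftList (a ++ [(iotaT h).graftList [s]]) :=
    graftList_graftAt_iotaT ha (by simpa [arity_iotaT])
  have hinner : (graftAt (iotaT h) 0 (iotaT g)).graftList (a ++ [s]) =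
      (iotaT h).graftList [(iotaT g).graftList (a ++ [s])] :=
    graftList_graftAt_iotaT (a := []) hh (by simpa [arity_iotaT])
  rw [← houter, ← hinner]
  refine hgen.graftList ?_ (List.forall₂_same.mpr fun t _ => refl t)
  have harity := arity_graftAt_add_one (iotaT g) (iotaT h : STerm S ar)
    (by rwa [arity_iotaT])
  simp only [arity_iotaT] at harity
  rw [List.length_append, List.length_singleton]
  lia

end MasRel

section LeftComb

open STerm

variable {S : Type} {ar : S → ℕ}

/-- The left comb `ι(g₁) ∘₁ (ι(g₂) ∘₁ (⋯ ∘₁ ι(g_ℓ)))`, which is the normal form of the terms whose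
decorations are `g₁, …, g_ℓ` in any order. As `graftList` pads short lists with leaves, grafting a
singleton list is `∘₁`. -/
def leftComb : List S → STerm S ar
  | [] => STerm.leaf
  | g :: w => (iotaT g).graftList [leftComb w]

theorem coe_decs_leftComb (hpos : ∀ g : S, 0 < ar g) (w : List S) :
    ((leftComb w : STerm S ar).decs : Multiset S) = w := by
  induction w with
  | nil => rfl
  | cons g w ih => rw [leftComb, coe_decs_graftList_iotaT_singleton (hpos g), ih, Multiset.cons_coe]

theorem masRel_leftComb_of_perm (hpos : ∀ g : S, 0 < ar g) {w w' : List S} (h : w.Perm w') :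
    MasRel (leftComb w : STerm S ar) (leftComb w') := by
  induction h with
  | nil => exact .refl _
  | cons g _ ih => exact MasRel.graftList_iotaT_singleton (hpos g) ih
  | swap g h w => exact MasRel.graftList_iotaT_append_swap (a := []) (hpos h) (hpos g) _
  | trans _ _ ih ih' => exact ih.trans ih'

theorem masRel_graftList_iotaT_append_leftComb (hpos : ∀ g : S, 0 < ar g) {g : S}
    {a : List (STerm S ar)} (ha : a.length < ar g) {v : List S}
    (h : MasRel ((iotaT g).graftList a) (leftComb v)) (w : List S) :
    MasRel ((iotaT g).graftList (a ++ [leftComb w])) (leftComb (w ++ v)) := by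
  induction w with
  | nil => exact (graftList_append_replicate_leaf (iotaT g) a 1).symm ▸ h
  | cons k w ih =>
    exact (MasRel.graftList_iotaT_append_swap ha (hpos k) _).trans
      (MasRel.graftList_iotaT_singleton (hpos k) ih)

theorem masRel_graftList_iotaT_map_leftComb (hpos : ∀ g : S, 0 < ar g) {g : S}
    (ws : List (List S)) (hws : ws.length ≤ ar g) :
    MasRel ((iotaT g : STerm S ar).graftList (ws.map leftComb))
      (leftComb (ws.reverse.flatten ++ [g])) := by
  induction ws using List.reverseRecOn with
  | nil => exact graftList_append_replicate_leaf (iotaT g : STerm S ar) [] 1 ▸ .refl _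
  | append_singleton ws w ih =>
    rw [List.length_append, List.length_singleton] at hws
    rw [List.map_append, List.map_singleton, List.reverse_concat, List.flatten_cons,
      List.append_assoc]
    exact masRel_graftList_iotaT_append_leftComb hpos (by rwa [List.length_map])
      (ih (Nat.le_of_succ_le hws)) w

theorem exists_masRel_leftComb (hpos : ∀ g : S, 0 < ar g) (t : STerm S ar) :
    ∃ w, MasRel t (leftComb w) := by
  induction t with
  | leaf => exact ⟨[], .refl _⟩
  | node g c ih =>
    choose w hw using ih
    have hchildren : MasRel (STerm.node g c)
        ((iotaT g).graftList ((List.ofFn w).map leftComb)) := by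
      rw [← graftList_iotaT_ofFn g c]
      refine (MasRel.refl _).graftList (by simp [arity_iotaT]) ?_
      simpa [List.forall₂_iff_get] using fun i hi => hw ⟨i, hi⟩
    exact ⟨_, hchildren.trans (masRel_graftList_iotaT_map_leftComb hpos _ (by simp))⟩

theorem masRel_leftComb_decs (hpos : ∀ g : S, 0 < ar g) (t : STerm S ar) :
    MasRel t (leftComb t.decs) := by
  obtain ⟨w, hw⟩ := exists_masRel_leftComb hpos t
  have hdecs : (w : Multiset S) = t.decs := by rw [hw.coe_decs_eq, coe_decs_leftComb hpos]
  exact hw.trans (masRel_leftComb_of_perm hpos (Multiset.coe_eq_coe.mp hdecs))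

theorem masRel_of_decs_perm (hpos : ∀ g : S, 0 < ar g) {t t' : STerm S ar}
    (h : t.decs.Perm t'.decs) : MasRel t t' :=
  (masRel_leftComb_decs hpos t).trans
    ((masRel_leftComb_of_perm hpos h).trans (masRel_leftComb_decs hpos t').symm)

end LeftComb

/-- two `S`-terms are equivalent for the multi-multiassociative congruence iff
they have the same multiset of decorations; the elements of arity `n` of `MAs_S` correspond to
the multisets `{g₁,…,g_ℓ}` with `ar g₁ + ⋯ + ar g_ℓ - ℓ + 1 = n`, and the operadic
composition corresponds to multiset union. -/
theorem masRel_iff_decs_multiset {S : Type} {ar : S → ℕ} (hpos : ∀ g : S, 0 < ar g) :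
    (∀ t t' : STerm S ar, MasRel t t' ↔ (t.decs : Multiset S) = (t'.decs : Multiset S)) ∧
    (∀ (M : Multiset S) (n : ℕ),
      (∃ t : STerm S ar, t.arity = n ∧ (t.decs : Multiset S) = M) ↔
        (M.map ar).sum + 1 = Multiset.card M + n) ∧
    (∀ (t s : STerm S ar) (i : ℕ), i < t.arity →
      ((graftAt t i s).decs : Multiset S) = (t.decs : Multiset S) + (s.decs : Multiset S)) := by
  refine ⟨fun t t' => ⟨MasRel.coe_decs_eq, fun h =>
    masRel_of_decs_perm hpos (Multiset.coe_eq_coe.mp h)⟩, fun M n => ⟨?_, fun hM => ?_⟩,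
    fun t s _ => STerm.coe_decs_graftAt t s⟩
  · rintro ⟨t, rfl, rfl⟩
    simpa using STerm.sum_map_ar_decs_add_one t
  · have hdecs := coe_decs_leftComb hpos M.toList
    rw [Multiset.coe_toList] at hdecs
    have hcount := STerm.sum_map_ar_decs_add_one (leftComb M.toList : STerm S ar)
    rw [← Multiset.sum_coe, ← Multiset.map_coe, ← Multiset.coe_card, hdecs, hM] at hcount
    exact ⟨leftComb M.toList, (Nat.add_left_cancel hcount).symm, hdecs⟩
end

section
/- Let S be a signature and 𝕂 a field of characteristic zero. The coproduct Δ on N(S) is coassociative: for every reduced S-forest f, (Δ ⊗ id) ∘ Δ (E_f) = (id ⊗ Δ) ∘ Δ (E_f) in N(S) ⊗ N(S) ⊗ N(S). -/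
open scoped BigOperators

/-!
Read a forest `L` as a morphism from its list of leaves to its list of roots: grafting
is then composition, and it is associative. Extended to forests with leaf entries, the coproduct
becomes `Δ E_{rd L} = ∑ E_{rd a} ⊗ E_{rd b}`, summed over all decompositions `L = a⟨b⟩`; leaf
entries do no harm, because the sum is multiplicative in `L` and a leaf only factors as `⊥ = ⊥⟨⊥⟩`,
which contributes `1 ⊗ 1`. Both iterated coproducts of `E_{rd L}` are therefore sums over the
decompositions `L = a⟨b⟨c⟩⟩`.
-/

theorem exists_append_of_length_eq_add {α : Type*} {l : List α} {m n : ℕ}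
    (h : l.length = m + n) : ∃ l₁ l₂, l = l₁ ++ l₂ ∧ l₁.length = m ∧ l₂.length = n :=
  ⟨l.take m, l.drop m, (List.take_append_drop m l).symm, by simp [h], by simp [h]⟩

theorem finsum_mem_eq_mul_of_bijOn_prod {α β γ R : Type*} [NonUnitalNonAssocSemiring R]
    {s : Set α} {t : Set β} {r : Set γ} {e : α × β → γ} {f : α → R} {g : β → R} {h : γ → R}
    (he : Set.BijOn e (s ×ˢ t) r) (hs : s.Finite) (ht : t.Finite)
    (hmul : ∀ x ∈ s, ∀ y ∈ t, h (e (x, y)) = f x * g y) :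
    ∑ᶠ z ∈ r, h z = (∑ᶠ x ∈ s, f x) * ∑ᶠ y ∈ t, g y := by
  rw [← finsum_mem_eq_of_bijOn (f := fun q => f q.1 * g q.2) e he
      fun q hq => (hmul q.1 hq.1 q.2 hq.2).symm,
    finsum_mem_eq_finite_toFinset_sum _ (hs.prod ht), finsum_mem_eq_finite_toFinset_sum _ hs,
    finsum_mem_eq_finite_toFinset_sum _ ht, Finset.sum_mul_sum, ← Finset.sum_product',
    Set.Finite.toFinset_prod]

section ForestGrafting

variable {S : Type} {ar : S → ℕ}

/-- The arity of a forest: its total number of leaves. -/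
def forestArity (L : List (STerm S ar)) : ℕ := (L.map STerm.arity).sum

@[simp]
theorem forestArity_nil : forestArity ([] : List (STerm S ar)) = 0 := rfl

@[simp]
theorem forestArity_cons (t : STerm S ar) (L : List (STerm S ar)) :
    forestArity (t :: L) = t.arity + forestArity L := by
  simp [forestArity]

theorem forestArity_append (L L' : List (STerm S ar)) :
    forestArity (L ++ L') = forestArity L + forestArity L' := by
  simp [forestArity]

theorem STerm.arity_node (g : S) (c : Fin (ar g) → STerm S ar) :
    (STerm.node g c).arity = forestArity (List.ofFn c) := by
  simp [STerm.arity, forestArity, List.map_ofFn, List.sum_ofFn]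

/-- Grafting of the forest `b` onto the leaves of the forest `a`. It is only meaningful when
`b.length = forestArity a`; otherwise missing terms are read as leaves and excess ones dropped. -/
def graftForest : List (STerm S ar) → List (STerm S ar) → List (STerm S ar)
  | [], _ => []
  | s :: a, b => s.graftList (b.take s.arity) :: graftForest a (b.drop s.arity)

@[simp]
theorem length_graftForest (a b : List (STerm S ar)) : (graftForest a b).length = a.length := by
  induction a generalizing b with
  | nil => rfl
  | cons s a ih => simp [graftForest, ih]

theorem graftForest_cons_append {s : STerm S ar} {u : List (STerm S ar)}
    (hu : u.length = s.arity) (a b : List (STerm S ar)) :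
    graftForest (s :: a) (u ++ b) = s.graftList u :: graftForest a b := by
  simp [graftForest, ← hu]

@[simp]
theorem graftForest_leaf_cons (x : STerm S ar) (a b : List (STerm S ar)) :
    graftForest (STerm.leaf :: a) (x :: b) = x :: graftForest a b := rfl

theorem graftForest_append {a b : List (STerm S ar)} (hb : b.length = forestArity a)
    (a' b' : List (STerm S ar)) :
    graftForest (a ++ a') (b ++ b') = graftForest a b ++ graftForest a' b' := by
  induction a generalizing b with
  | nil =>
    obtain rfl : b = [] := by simpa using hb
    rfl
  | cons s a ih =>
    rw [forestArity_cons] at hb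
    simp only [List.cons_append, graftForest]
    rw [List.take_append_of_le_length (by lia), List.drop_append_of_le_length (by lia),
      ih (by simp; lia)]

theorem graftForest_ofFn {n : ℕ} (c : Fin n → STerm S ar) (b : List (STerm S ar)) :
    graftForest (List.ofFn c) b = List.ofFn fun i : Fin n =>
      (c i).graftList
        ((b.drop (∑ j : Fin n, if (j : ℕ) < (i : ℕ) then (c j).arity else 0)).take
          (c i).arity) := by
  induction n generalizing b with
  | zero => simp [graftForest]
  | succ n ih => simp [List.ofFn_succ, graftForest, ih, Fin.sum_univ_succ]

theorem STerm.exists_graftList_node (g : S) (c : Fin (ar g) → STerm S ar)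
    (b : List (STerm S ar)) :
    ∃ d, (STerm.node g c).graftList b = STerm.node g d ∧
      List.ofFn d = graftForest (List.ofFn c) b :=
  ⟨_, rfl, (graftForest_ofFn c b).symm⟩

@[elab_as_elim]
theorem forest_induction {P : List (STerm S ar) → Prop} (nil : P [])
    (leaf_cons : ∀ L, P L → P (STerm.leaf :: L))
    (node_cons : ∀ g c L, P (List.ofFn c) → P L → P (STerm.node g c :: L))
    (L : List (STerm S ar)) : P L := by
  have of_forall_cons : ∀ M : List (STerm S ar), (∀ t ∈ M, ∀ L, P L → P (t :: L)) → P M := by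
    intro M hM
    induction M with
    | nil => exact nil
    | cons t M ih =>
      exact hM t List.mem_cons_self M (ih fun s hs => hM s (List.mem_cons_of_mem t hs))
  have cons (t : STerm S ar) : ∀ L, P L → P (t :: L) := by
    induction t with
    | leaf => exact leaf_cons
    | node g c ih =>
      exact fun L => node_cons g c L (of_forall_cons _ (List.forall_mem_ofFn_iff.2 ih))
  exact of_forall_cons L fun t _ => cons t

theorem forestArity_graftForest {a b : List (STerm S ar)} (hb : b.length = forestArity a) :
    forestArity (graftForest a b) = forestArity b := by
  induction a using forest_induction generalizing b with
  | nil =>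
    obtain rfl : b = [] := by simpa using hb
    rfl
  | leaf_cons a ih =>
    rw [forestArity_cons, STerm.arity, add_comm] at hb
    obtain ⟨x, b, rfl⟩ := List.exists_cons_of_length_eq_add_one hb
    simp [ih (Nat.succ_injective hb)]
  | node_cons g c a ihc iha =>
    rw [forestArity_cons] at hb
    obtain ⟨u, b, rfl, hu, hb⟩ := exists_append_of_length_eq_add hb
    obtain ⟨d, hd, hdu⟩ := STerm.exists_graftList_node g c u
    rw [graftForest_cons_append hu, hd, forestArity_cons, STerm.arity_node, hdu, iha hb,
      ihc (hu.trans (STerm.arity_node g c)), forestArity_append]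

theorem graftForest_assoc {a b d : List (STerm S ar)} (hb : b.length = forestArity a)
    (hd : d.length = forestArity b) :
    graftForest (graftForest a b) d = graftForest a (graftForest b d) := by
  induction a using forest_induction generalizing b d with
  | nil => rfl
  | leaf_cons a ih =>
    rw [forestArity_cons, STerm.arity, add_comm] at hb
    obtain ⟨x, b, rfl⟩ := List.exists_cons_of_length_eq_add_one hb
    rw [forestArity_cons] at hd
    obtain ⟨u, d, rfl, hu, hd⟩ := exists_append_of_length_eq_add hd
    simp only [graftForest_leaf_cons, graftForest_cons_append hu]
    rw [ih (Nat.succ_injective hb) hd]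
  | node_cons g c a ihc iha =>
    rw [forestArity_cons] at hb
    obtain ⟨u, b, rfl, hu, hb⟩ := exists_append_of_length_eq_add hb
    rw [forestArity_append] at hd
    obtain ⟨v, d, rfl, hv, hd⟩ := exists_append_of_length_eq_add hd
    have hu' : u.length = forestArity (List.ofFn c) := hu.trans (STerm.arity_node g c)
    obtain ⟨x, hx, hxu⟩ := STerm.exists_graftList_node g c u
    obtain ⟨y, hy, hyv⟩ := STerm.exists_graftList_node g x v
    obtain ⟨z, hz, hzuv⟩ := STerm.exists_graftList_node g c (graftForest u v)
    have hx_arity : v.length = (STerm.node g x).arity := by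
      rw [STerm.arity_node, hxu, forestArity_graftForest hu', hv]
    obtain rfl : y = z := List.ofFn_injective <| by rw [hyv, hxu, ihc hu' hv, hzuv]
    rw [graftForest_cons_append hu, hx, graftForest_cons_append hx_arity, hy, iha hb hd,
      graftForest_append hv, graftForest_cons_append (by rw [length_graftForest, hu]), hz]

end ForestGrafting

section Factorizations

variable {S : Type} {ar : S → ℕ}

/-- The factorizations `t = s⟨u⟩` of a term, where `u` has one entry for each leaf of `s`. -/
def termFactorizations (t : STerm S ar) : Set (STerm S ar × List (STerm S ar)) :=
  {p | p.2.length = p.1.arity ∧ p.1.graftList p.2 = t}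

/-- The factorizations `L = a⟨b⟩` of a forest into two forests. -/
def forestFactorizations (L : List (STerm S ar)) : Set (List (STerm S ar) × List (STerm S ar)) :=
  {p | p.2.length = forestArity p.1 ∧ graftForest p.1 p.2 = L}

/-- The factorizations of a forest given entry by entry, as in the definition of the coproduct. -/
def entrywiseFactorizations (L : List (STerm S ar)) :
    Set (List (STerm S ar × List (STerm S ar))) :=
  {c | List.Forall₂ (fun p t => p ∈ termFactorizations t) c L}

theorem mk_mem_forestFactorizations {a b L : List (STerm S ar)} :
    (a, b) ∈ forestFactorizations L ↔ b.length = forestArity a ∧ graftForest a b = L :=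
  Iff.rfl

theorem termFactorizations_leaf :
    termFactorizations (STerm.leaf : STerm S ar) = {(STerm.leaf, [STerm.leaf])} := by
  ext ⟨s, u⟩
  constructor
  · rintro ⟨hu, hsu⟩
    cases s with
    | leaf =>
      obtain ⟨x, rfl⟩ := List.length_eq_one_iff.1 hu
      simpa [STerm.graftList] using hsu
    | node g c => simp [STerm.graftList] at hsu
  · rintro ⟨⟩
    exact ⟨rfl, rfl⟩

theorem termFactorizations_node_subset (g : S) (c : Fin (ar g) → STerm S ar) :
    termFactorizations (STerm.node g c) ⊆ insert (STerm.leaf, [STerm.node g c])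
      (Prod.map (STerm.node g) id '' (Prod.map List.ofFn id ⁻¹'
        forestFactorizations (List.ofFn c))) := by
  rintro ⟨s, u⟩ ⟨hu, hsu⟩
  cases s with
  | leaf =>
    obtain ⟨x, rfl⟩ := List.length_eq_one_iff.1 hu
    left
    simpa [STerm.graftList] using hsu
  | node g' d =>
    obtain ⟨e, he, heu⟩ := STerm.exists_graftList_node g' d u
    obtain ⟨rfl, ⟨⟩⟩ := STerm.node.inj (he.symm.trans hsu)
    exact Or.inr ⟨(d, u), ⟨hu.trans (STerm.arity_node _ d), heu.symm⟩, rfl⟩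

theorem forestFactorizations_nil :
    forestFactorizations ([] : List (STerm S ar)) = {([], [])} := by
  ext ⟨a, b⟩
  constructor
  · rintro ⟨hb, hab⟩
    obtain rfl : a = [] := List.length_eq_zero_iff.1 (by simpa using congrArg List.length hab)
    obtain rfl : b = [] := List.length_eq_zero_iff.1 hb
    rfl
  · rintro ⟨⟩
    exact ⟨rfl, rfl⟩

theorem entrywiseFactorizations_nil :
    entrywiseFactorizations ([] : List (STerm S ar)) = {[]} := by
  ext c
  simp [entrywiseFactorizations]

theorem bijOn_forestFactorizations_cons (t : STerm S ar) (L : List (STerm S ar)) :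
    Set.BijOn (fun q => (q.1.1 :: q.2.1, q.1.2 ++ q.2.2))
      (termFactorizations t ×ˢ forestFactorizations L) (forestFactorizations (t :: L)) := by
  refine ⟨?_, ?_, ?_⟩
  · rintro ⟨⟨s, u⟩, a, b⟩ ⟨⟨hu, hsu⟩, hb, hab⟩
    exact ⟨by simpa [hu] using hb, by rw [graftForest_cons_append hu, hsu, hab]⟩
  · rintro ⟨⟨s, u⟩, a, b⟩ ⟨⟨hu, -⟩, -⟩ ⟨⟨s', u'⟩, a', b'⟩ ⟨⟨hu', -⟩, -⟩ h
    obtain ⟨⟨rfl, rfl⟩, hub⟩ : (s = s' ∧ a = a') ∧ u ++ b = u' ++ b' := by simpa using h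
    obtain ⟨rfl, rfl⟩ := List.append_inj hub (hu.trans hu'.symm)
    rfl
  · rintro ⟨_ | ⟨s, a⟩, b⟩ ⟨hb, hab⟩
    · cases hab
    · obtain ⟨u, b, rfl, hu, hb⟩ :=
        exists_append_of_length_eq_add (hb.trans (forestArity_cons s a))
      obtain ⟨hsu, hab⟩ := List.cons.inj ((graftForest_cons_append hu a b).symm.trans hab)
      exact ⟨((s, u), a, b), ⟨⟨hu, hsu⟩, hb, hab⟩, rfl⟩

theorem bijOn_entrywiseFactorizations_cons (t : STerm S ar) (L : List (STerm S ar)) :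
    Set.BijOn (fun q => q.1 :: q.2) (termFactorizations t ×ˢ entrywiseFactorizations L)
      (entrywiseFactorizations (t :: L)) := by
  refine ⟨?_, ?_, ?_⟩
  · rintro ⟨p, c⟩ ⟨hp, hc⟩
    exact List.Forall₂.cons hp hc
  · rintro ⟨p, c⟩ - ⟨p', c'⟩ - h
    exact Prod.ext (List.cons.inj h).1 (List.cons.inj h).2
  · rintro _ (_ | ⟨hp, hc⟩)
    exact ⟨(_, _), ⟨hp, hc⟩, rfl⟩

theorem finite_termFactorizations_node {g : S} {c : Fin (ar g) → STerm S ar}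
    (h : (forestFactorizations (List.ofFn c)).Finite) :
    (termFactorizations (STerm.node g c)).Finite := by
  have inj : (Prod.map List.ofFn id :
      (Fin (ar g) → STerm S ar) × List (STerm S ar) → _).Injective :=
    List.ofFn_injective.prodMap Function.injective_id
  exact (((h.preimage inj.injOn).image _).insert _).subset (termFactorizations_node_subset g c)

theorem finite_forestFactorizations (L : List (STerm S ar)) :
    (forestFactorizations L).Finite := by
  induction L using forest_induction with
  | nil => simp [forestFactorizations_nil]
  | leaf_cons L ih =>
    rw [← (bijOn_forestFactorizations_cons _ L).image_eq, termFactorizations_leaf]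
    exact ((Set.finite_singleton _).prod ih).image _
  | node_cons g c L ihc ihL =>
    rw [← (bijOn_forestFactorizations_cons _ L).image_eq]
    exact ((finite_termFactorizations_node ihc).prod ihL).image _

theorem finite_termFactorizations (t : STerm S ar) : (termFactorizations t).Finite := by
  cases t with
  | leaf => simp [termFactorizations_leaf]
  | node g c => exact finite_termFactorizations_node (finite_forestFactorizations _)

theorem finite_entrywiseFactorizations (L : List (STerm S ar)) :
    (entrywiseFactorizations L).Finite := by
  induction L with
  | nil => simp [entrywiseFactorizations_nil]
  | cons t L ih =>
    rw [← (bijOn_entrywiseFactorizations_cons t L).image_eq]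
    exact ((finite_termFactorizations t).prod ih).image _

theorem mem_forestFactorizations_assoc {a b d L : List (STerm S ar)} :
    ((graftForest a b, d) ∈ forestFactorizations L ∧
        (a, b) ∈ forestFactorizations (graftForest a b)) ↔
      ((a, graftForest b d) ∈ forestFactorizations L ∧
        (b, d) ∈ forestFactorizations (graftForest b d)) := by
  simp only [mk_mem_forestFactorizations, length_graftForest, and_true]
  constructor
  · rintro ⟨⟨hd, hL⟩, hb⟩
    rw [forestArity_graftForest hb] at hd
    exact ⟨⟨hb, graftForest_assoc hb hd ▸ hL⟩, hd⟩
  · rintro ⟨⟨hb, hL⟩, hd⟩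
    exact ⟨⟨hd.trans (forestArity_graftForest hb).symm, (graftForest_assoc hb hd).trans hL⟩, hb⟩

theorem sum_forestFactorizations_assoc {M : Type*} [AddCommMonoid M] (L : List (STerm S ar))
    (F : List (STerm S ar) → List (STerm S ar) → List (STerm S ar) → M) :
    ∑ p ∈ (finite_forestFactorizations L).toFinset,
        ∑ q ∈ (finite_forestFactorizations p.1).toFinset, F q.1 q.2 p.2 =
      ∑ p ∈ (finite_forestFactorizations L).toFinset,
        ∑ q ∈ (finite_forestFactorizations p.2).toFinset, F p.1 q.1 q.2 := by
  rw [Finset.sum_sigma', Finset.sum_sigma']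
  refine Finset.sum_bij'
    (fun x _ => ⟨(x.2.1, graftForest x.2.2 x.1.2), (x.2.2, x.1.2)⟩)
    (fun y _ => ⟨(graftForest y.1.1 y.2.1, y.2.2), (y.1.1, y.2.1)⟩) ?_ ?_ ?_ ?_ fun _ _ => rfl <;>
    simp only [Finset.mem_sigma, Set.Finite.mem_toFinset, Sigma.forall, Prod.forall]
  · rintro _ d a b ⟨hp, hb, rfl⟩
    exact mem_forestFactorizations_assoc.1 ⟨hp, hb, rfl⟩
  · rintro a _ b d ⟨hp, hd, rfl⟩
    exact mem_forestFactorizations_assoc.2 ⟨hp, hd, rfl⟩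
  · rintro _ d a b ⟨-, -, rfl⟩
    rfl
  · rintro a _ b d ⟨-, -, rfl⟩
    rfl

end Factorizations

section Coproduct

open scoped TensorProduct

variable (𝕂 : Type) [CommSemiring 𝕂] {S : Type} {ar : S → ℕ}

theorem rdF_append (L L' : List (STerm S ar)) : rdF (L ++ L') = rdF L ++ rdF L' := by
  induction L with
  | nil => rfl
  | cons t L ih => cases t <;> simp [rdF, ih]

theorem EBasis_append (f f' : List (RTerm S ar)) :
    EBasis 𝕂 (f ++ f') = EBasis 𝕂 f * EBasis 𝕂 f' := by
  simp [EBasis]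

theorem EBasis_rdF_append (L L' : List (STerm S ar)) :
    EBasis 𝕂 (rdF (L ++ L')) = EBasis 𝕂 (rdF L) * EBasis 𝕂 (rdF L') := by
  rw [rdF_append, EBasis_append]

/-- The coproduct of a single term, which may be a leaf. -/
noncomputable def termCoproduct (t : STerm S ar) : NAlg 𝕂 S ar ⊗[𝕂] NAlg 𝕂 S ar :=
  ∑ᶠ p ∈ termFactorizations t, EBasis 𝕂 (rdF [p.1]) ⊗ₜ[𝕂] EBasis 𝕂 (rdF p.2)

theorem termCoproduct_leaf : termCoproduct 𝕂 (STerm.leaf : STerm S ar) = 1 := by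
  rw [termCoproduct, termFactorizations_leaf, finsum_mem_singleton]
  rfl

theorem prod_termCoproduct_rdF (L : List (STerm S ar)) :
    (((rdF L).map Subtype.val).map (termCoproduct 𝕂)).prod =
      (L.map (termCoproduct 𝕂)).prod := by
  induction L with
  | nil => rfl
  | cons t L ih =>
    cases t with
    | leaf => rw [rdF, ih, List.map_cons, List.prod_cons, termCoproduct_leaf, one_mul]
    | node g c => simp only [rdF, List.map_cons, List.prod_cons, ih]

theorem finsum_forestFactorizations (L : List (STerm S ar)) :
    ∑ᶠ p ∈ forestFactorizations L, EBasis 𝕂 (rdF p.1) ⊗ₜ[𝕂] EBasis 𝕂 (rdF p.2) =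
      (L.map (termCoproduct 𝕂)).prod := by
  induction L with
  | nil =>
    rw [forestFactorizations_nil, finsum_mem_singleton]
    rfl
  | cons t L ih =>
    rw [List.map_cons, List.prod_cons, ← ih]
    refine finsum_mem_eq_mul_of_bijOn_prod (bijOn_forestFactorizations_cons t L)
      (finite_termFactorizations t) (finite_forestFactorizations L) fun p _ q _ => ?_
    rw [Algebra.TensorProduct.tmul_mul_tmul, ← EBasis_rdF_append, ← EBasis_rdF_append,
      List.singleton_append]

theorem finsum_entrywiseFactorizations (L : List (STerm S ar)) :
    ∑ᶠ c ∈ entrywiseFactorizations L,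
        EBasis 𝕂 (rdF (c.map Prod.fst)) ⊗ₜ[𝕂] EBasis 𝕂 (rdF (c.flatMap Prod.snd)) =
      (L.map (termCoproduct 𝕂)).prod := by
  induction L with
  | nil =>
    rw [entrywiseFactorizations_nil, finsum_mem_singleton]
    rfl
  | cons t L ih =>
    rw [List.map_cons, List.prod_cons, ← ih]
    refine finsum_mem_eq_mul_of_bijOn_prod (bijOn_entrywiseFactorizations_cons t L)
      (finite_termFactorizations t) (finite_entrywiseFactorizations L) fun p _ c _ => ?_
    rw [Algebra.TensorProduct.tmul_mul_tmul, ← EBasis_rdF_append, ← EBasis_rdF_append,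
      List.singleton_append, List.map_cons, List.flatMap_cons]

theorem DeltaN_EBasis (f : List (RTerm S ar)) :
    DeltaN 𝕂 S ar (EBasis 𝕂 f) = ((f.map Subtype.val).map (termCoproduct 𝕂)).prod := by
  rw [← finsum_entrywiseFactorizations]
  simp only [entrywiseFactorizations, List.forall₂_map_right_iff]
  simp [DeltaN, EBasis, termFactorizations]

theorem DeltaN_EBasis_rdF (L : List (STerm S ar)) :
    DeltaN 𝕂 S ar (EBasis 𝕂 (rdF L)) = ∑ p ∈ (finite_forestFactorizations L).toFinset,
      EBasis 𝕂 (rdF p.1) ⊗ₜ[𝕂] EBasis 𝕂 (rdF p.2) := by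
  rw [DeltaN_EBasis, prod_termCoproduct_rdF, ← finsum_forestFactorizations,
    finsum_mem_eq_finite_toFinset_sum]

theorem rdF_map_val (f : List (RTerm S ar)) : rdF (f.map Subtype.val) = f := by
  induction f with
  | nil => rfl
  | cons t f ih =>
    obtain ⟨_ | ⟨g, c⟩, ht⟩ := t
    · exact absurd rfl ht
    · simp only [List.map_cons, rdF, ih]

theorem DeltaN_coassoc_EBasis_rdF (L : List (STerm S ar)) :
    (TensorProduct.assoc 𝕂 (NAlg 𝕂 S ar) (NAlg 𝕂 S ar) (NAlg 𝕂 S ar))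
        ((DeltaN 𝕂 S ar).rTensor _ (DeltaN 𝕂 S ar (EBasis 𝕂 (rdF L)))) =
      (DeltaN 𝕂 S ar).lTensor _ (DeltaN 𝕂 S ar (EBasis 𝕂 (rdF L))) := by
  simp only [DeltaN_EBasis_rdF, map_sum, LinearMap.rTensor_tmul, LinearMap.lTensor_tmul,
    TensorProduct.sum_tmul, TensorProduct.tmul_sum, TensorProduct.assoc_tmul]
  exact sum_forestFactorizations_assoc L fun a b d =>
    EBasis 𝕂 (rdF a) ⊗ₜ[𝕂] (EBasis 𝕂 (rdF b) ⊗ₜ[𝕂] EBasis 𝕂 (rdF d))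

theorem DeltaN_coassoc_general (S : Type) (ar : S → ℕ) :
    (TensorProduct.assoc 𝕂 (NAlg 𝕂 S ar) (NAlg 𝕂 S ar) (NAlg 𝕂 S ar)).toLinearMap ∘ₗ
        (DeltaN 𝕂 S ar).rTensor _ ∘ₗ DeltaN 𝕂 S ar =
      (DeltaN 𝕂 S ar).lTensor _ ∘ₗ DeltaN 𝕂 S ar := by
  refine MonoidAlgebra.lhom_ext' fun m => LinearMap.ext_ring ?_
  have h := DeltaN_coassoc_EBasis_rdF 𝕂 (m.toList.map Subtype.val)
  rw [rdF_map_val] at h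
  exact h

end Coproduct

open scoped TensorProduct in
/-- the coproduct `Δ` of `N(S)` is coassociative on the basis elements `E_f`. -/
theorem DeltaN_coassoc {S : Type} {ar : S → ℕ} (𝕂 : Type) [Field 𝕂] [CharZero 𝕂]
    (f : List (RTerm S ar)) :
    (TensorProduct.assoc 𝕂 (NAlg 𝕂 S ar) (NAlg 𝕂 S ar) (NAlg 𝕂 S ar))
        ((TensorProduct.map (DeltaN 𝕂 S ar) LinearMap.id) (DeltaN 𝕂 S ar (EBasis 𝕂 f)))
      = (TensorProduct.map LinearMap.id (DeltaN 𝕂 S ar)) (DeltaN 𝕂 S ar (EBasis 𝕂 f)) :=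
  LinearMap.congr_fun (DeltaN_coassoc_general 𝕂 S ar) (EBasis 𝕂 f)
end
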